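/- arXiv:2508.20753 — 9 statements merged into one kernel-verified Lean document; each statement's English description precedes it below -/
import Mathlib

section
/- Let T ≥ 4 be an even integer. Then ξ'(-1) = 1/(2(T-1)), ξ''(-1) = 0, ξ''(ρ) > 0 for every real ρ > -1, and ξ'''(ρ) > 0 for every real ρ ≥ -1. -/
/-!
Write `T = 2M + 4`. Up to the factor `1 / (T (T - 1))`, the third derivative of `ξ` is twice
`F_M(r) = ∑_{i ≤ 2M} (i+1)(i+2)/2 · (2M+1-i) rⁱ`, the coefficient of `x^{2M}` in
`1 / ((1-x)² (1-rx)³)`. Taking the even part in `x` and putting `y = x²`,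
`∑_M F_M(r) y^M = B(y) / (1 - r² y)³`, where
`B(y) = 1 + ∑_{j ≥ 0} (3 (1+r)² + 2j (1+r)³) y^{j+1}`
has nonnegative coefficients when `r ≥ -1`. Dividing by `1 - r² y` three times amounts to
three first-order recurrences `u_{M+1} = r² u_M + v_{M+1}` (`sumD_succ`, `sumE_succ`, `sumF_succ`),
and positivity propagates along them (`sumD_pos`, `sumE_pos`, `sumF_pos`).

The vanishing of `ξ''(-1)` comes from the palindromic coefficients of a polynomial of odd degree
(`sum_second_neg_one`), and positivity of `ξ''` on `(-1, ∞)` follows from `ξ''(-1) = 0` and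
`ξ''' > 0`.
-/

open Finset

/-- The Lancaster bias-correction polynomial
`ξ(r) = (1/(T(T-1))) · Σ_{t=1}^{T-1} ((T-t)/t) · r^t`. -/
noncomputable def xi (T : ℕ) (r : ℝ) : ℝ :=
  (1 / ((T : ℝ) * ((T : ℝ) - 1))) *
    ∑ t ∈ Finset.Icc 1 (T - 1), (((T : ℝ) - (t : ℝ)) / (t : ℝ)) * r ^ t

/-- `∑_{i ≤ 2M} (2M+1-i) rⁱ`, the sum in `ξ'` for `T = 2M + 2`. -/
noncomputable def sumK (M : ℕ) (r : ℝ) : ℝ :=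
  ∑ i ∈ Finset.range (2 * M + 1), (2 * (M : ℝ) + 1 - i) * r ^ i

/-- The coefficient of `y^M` in `B(y) / (1 - r² y)`, in closed form. -/
noncomputable def sumD (M : ℕ) (r : ℝ) : ℝ :=
  4 * sumK M r - 3 * (2 * (M : ℝ) + 1) - 2 * M * r

/-- The coefficient of `y^M` in `B(y) / (1 - r² y)²`, in closed form. -/
noncomputable def sumE (M : ℕ) (r : ℝ) : ℝ :=
  ∑ i ∈ Finset.range (2 * M + 1), (2 * (i : ℝ) + 1) * (2 * (M : ℝ) + 1 - i) * r ^ i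

/-- The coefficient of `y^M` in `B(y) / (1 - r² y)³`, in closed form; twice this is the sum in
`ξ'''` for `T = 2M + 4`. -/
noncomputable def sumF (M : ℕ) (r : ℝ) : ℝ :=
  ∑ i ∈ Finset.range (2 * M + 1),
    ((i : ℝ) + 1) * (i + 2) / 2 * (2 * (M : ℝ) + 1 - i) * r ^ i

lemma sumK_succ (M : ℕ) (r : ℝ) :
    sumK (M + 1) r = r ^ 2 * sumK M r + (2 * M + 3) + (2 * M + 2) * r := by
  unfold sumK
  rw [show 2 * (M + 1) + 1 = 2 * M + 1 + 1 + 1 by ring, Finset.sum_range_succ',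
    Finset.sum_range_succ', Finset.mul_sum]
  have h : ∀ i ∈ Finset.range (2 * M + 1),
      (2 * ((M + 1 : ℕ) : ℝ) + 1 - ((i + 1 + 1 : ℕ) : ℝ)) * r ^ (i + 1 + 1)
        = r ^ 2 * ((2 * (M : ℝ) + 1 - i) * r ^ i) := by
    intro i _
    push_cast
    ring
  rw [Finset.sum_congr rfl h]
  push_cast
  ring

/-- The inhomogeneous term is the coefficient of `y^{M+1}` in `B(y)`. -/
lemma sumD_succ (M : ℕ) (r : ℝ) :
    sumD (M + 1) r = r ^ 2 * sumD M r + (3 * (1 + r) ^ 2 + 2 * M * (1 + r) ^ 3) := by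
  unfold sumD
  rw [sumK_succ]
  push_cast
  ring

lemma sumE_succ (M : ℕ) (r : ℝ) :
    sumE (M + 1) r = r ^ 2 * sumE M r + sumD (M + 1) r := by
  unfold sumD sumE sumK
  rw [show 2 * (M + 1) + 1 = 2 * M + 1 + 1 + 1 by ring]
  simp only [Finset.sum_range_succ' _ (2 * M + 1 + 1), Finset.sum_range_succ' _ (2 * M + 1)]
  have h : ∀ i ∈ Finset.range (2 * M + 1),
      (2 * ((i + 1 + 1 : ℕ) : ℝ) + 1) * (2 * ((M + 1 : ℕ) : ℝ) + 1 - ((i + 1 + 1 : ℕ) : ℝ))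
          * r ^ (i + 1 + 1)
        = r ^ 2 * ((2 * (i : ℝ) + 1) * (2 * (M : ℝ) + 1 - i) * r ^ i)
          + 4 * ((2 * ((M + 1 : ℕ) : ℝ) + 1 - ((i + 1 + 1 : ℕ) : ℝ)) * r ^ (i + 1 + 1)) := by
    intro i _
    push_cast
    ring
  rw [Finset.sum_congr rfl h, Finset.sum_add_distrib, ← Finset.mul_sum, ← Finset.mul_sum]
  push_cast
  ring

lemma sumF_succ (M : ℕ) (r : ℝ) :
    sumF (M + 1) r = r ^ 2 * sumF M r + sumE (M + 1) r := by
  unfold sumE sumF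
  rw [show 2 * (M + 1) + 1 = 2 * M + 1 + 1 + 1 by ring]
  simp only [Finset.sum_range_succ' _ (2 * M + 1 + 1), Finset.sum_range_succ' _ (2 * M + 1)]
  have h : ∀ i ∈ Finset.range (2 * M + 1),
      (((i + 1 + 1 : ℕ) : ℝ) + 1) * (((i + 1 + 1 : ℕ) : ℝ) + 2) / 2
          * (2 * ((M + 1 : ℕ) : ℝ) + 1 - ((i + 1 + 1 : ℕ) : ℝ)) * r ^ (i + 1 + 1)
        = r ^ 2 * (((i : ℝ) + 1) * (i + 2) / 2 * (2 * (M : ℝ) + 1 - i) * r ^ i)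
          + (2 * ((i + 1 + 1 : ℕ) : ℝ) + 1)
            * (2 * ((M + 1 : ℕ) : ℝ) + 1 - ((i + 1 + 1 : ℕ) : ℝ)) * r ^ (i + 1 + 1) := by
    intro i _
    push_cast
    ring
  rw [Finset.sum_congr rfl h, Finset.sum_add_distrib, ← Finset.mul_sum]
  push_cast
  ring

lemma sumD_pos {r : ℝ} (hr : -1 ≤ r) (M : ℕ) : 0 < sumD M r := by
  induction M with
  | zero => norm_num [sumD, sumK]
  | succ M ih =>
    rw [sumD_succ]
    -- At `r = -1` the inhomogeneous term vanishes, but then `r ^ 2 = 1`.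
    rcases hr.eq_or_lt with rfl | h
    · simpa using ih
    · have h1 : 0 < 1 + r := by linarith
      positivity

lemma sumE_pos {r : ℝ} (hr : -1 ≤ r) (M : ℕ) : 0 < sumE M r := by
  induction M with
  | zero => norm_num [sumE]
  | succ M ih =>
    rw [sumE_succ]
    have := sumD_pos hr (M + 1)
    positivity

lemma sumF_pos {r : ℝ} (hr : -1 ≤ r) (M : ℕ) : 0 < sumF M r := by
  induction M with
  | zero => norm_num [sumF]
  | succ M ih =>
    rw [sumF_succ]
    have := sumE_pos hr (M + 1)
    positivity

lemma sumK_neg_one (M : ℕ) : sumK M (-1) = M + 1 := by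
  induction M with
  | zero => norm_num [sumK]
  | succ M ih =>
    rw [sumK_succ, ih]
    push_cast
    ring

/-- The coefficients are symmetric under `i ↦ 2M + 1 - i`, which reverses the parity of `i`, so the
sum equals its own negative. -/
lemma sum_second_neg_one (M : ℕ) :
    ∑ i ∈ Finset.range (2 * M + 2), (2 * (M : ℝ) + 2 - i) * (i + 1) * (-1 : ℝ) ^ i = 0 := by
  have h := Finset.sum_range_reflect
    (fun i : ℕ => (2 * (M : ℝ) + 2 - i) * (i + 1) * (-1 : ℝ) ^ i) (2 * M + 2)
  have h2 : ∀ i ∈ Finset.range (2 * M + 2),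
      (2 * (M : ℝ) + 2 - ((2 * M + 2 - 1 - i : ℕ) : ℝ)) * (((2 * M + 2 - 1 - i : ℕ) : ℝ) + 1)
          * (-1 : ℝ) ^ (2 * M + 2 - 1 - i)
        = -((2 * (M : ℝ) + 2 - i) * (i + 1) * (-1 : ℝ) ^ i) := by
    intro i hi
    rw [Finset.mem_range] at hi
    obtain ⟨k, hk⟩ : ∃ k, 2 * M + 1 = i + k := ⟨2 * M + 1 - i, by omega⟩
    have hsub : 2 * M + 2 - 1 - i = k := by omega
    have hk' : (2 * (M : ℝ) + 1) = i + k := by exact_mod_cast hk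
    have hpow : (-1 : ℝ) ^ k = -(-1 : ℝ) ^ i := by
      have h1 : (-1 : ℝ) ^ i * (-1 : ℝ) ^ k = -1 := by
        rw [← pow_add, ← hk, pow_succ, pow_mul]
        norm_num
      rcases neg_one_pow_eq_or ℝ i with h0 | h0 <;> rw [h0] at h1 ⊢ <;> linarith
    rw [hsub, hpow, show 2 * (M : ℝ) + 2 = i + k + 1 by linarith]
    ring
  rw [Finset.sum_congr rfl h2, Finset.sum_neg_distrib] at h
  linarith

lemma hasDerivAt_sum_range (a : ℕ → ℝ) (n : ℕ) (r : ℝ) :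
    HasDerivAt (fun x : ℝ => ∑ i ∈ Finset.range (n + 1), a i * x ^ i)
      (∑ i ∈ Finset.range n, a (i + 1) * ((i : ℝ) + 1) * r ^ i) r := by
  have h : HasDerivAt (fun x : ℝ => ∑ i ∈ Finset.range (n + 1), a i * x ^ i)
      (∑ i ∈ Finset.range (n + 1), a i * ((i : ℝ) * r ^ (i - 1))) r :=
    HasDerivAt.fun_sum fun i _ => (hasDerivAt_pow i r).const_mul (a i)
  convert h using 1
  rw [Finset.sum_range_succ']
  simp [mul_assoc]

/-- The `t = 0` term added here is zero, since `x / 0 = 0`. -/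
lemma xi_eq_sum_range (M : ℕ) (r : ℝ) :
    xi (2 * M + 4) r = (1 / ((2 * (M : ℝ) + 4) * (2 * M + 3))) *
      ∑ t ∈ Finset.range (2 * M + 3 + 1), ((2 * (M : ℝ) + 4 - t) / t) * r ^ t := by
  unfold xi
  have hI : Finset.range (2 * M + 3 + 1) = insert 0 (Finset.Icc 1 (2 * M + 4 - 1)) := by
    ext t
    simp only [Finset.mem_range, Finset.mem_insert, Finset.mem_Icc]
    omega
  rw [hI, Finset.sum_insert (by simp)]
  push_cast
  rw [show (2 * (M : ℝ) + 4 - 1) = 2 * M + 3 by ring]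
  simp

lemma deriv_xi (M : ℕ) : deriv (xi (2 * M + 4)) = fun r =>
    (1 / ((2 * (M : ℝ) + 4) * (2 * M + 3))) * sumK (M + 1) r := by
  funext r
  rw [funext (xi_eq_sum_range M)]
  refine (((hasDerivAt_sum_range (fun t : ℕ => (2 * (M : ℝ) + 4 - t) / t)
    (2 * M + 3) r).const_mul _).congr_deriv ?_).deriv
  unfold sumK
  congr 1
  refine Finset.sum_congr rfl fun i _ => ?_
  have : (i : ℝ) + 1 ≠ 0 := by positivity
  push_cast
  field_simp
  ring

lemma iteratedDeriv_two_xi (M : ℕ) : iteratedDeriv 2 (xi (2 * M + 4)) = fun r =>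
    (1 / ((2 * (M : ℝ) + 4) * (2 * M + 3))) *
      ∑ i ∈ Finset.range (2 * M + 2), (2 * (M : ℝ) + 2 - i) * (i + 1) * r ^ i := by
  rw [iteratedDeriv_succ, iteratedDeriv_one, deriv_xi]
  funext r
  refine (((hasDerivAt_sum_range (fun i : ℕ => 2 * ((M + 1 : ℕ) : ℝ) + 1 - i)
    (2 * M + 2) r).const_mul _).congr_deriv ?_).deriv
  congr 1
  refine Finset.sum_congr rfl fun i _ => ?_
  push_cast
  ring

lemma hasDerivAt_iteratedDeriv_two_xi (M : ℕ) (r : ℝ) :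
    HasDerivAt (iteratedDeriv 2 (xi (2 * M + 4)))
      ((1 / ((2 * (M : ℝ) + 4) * (2 * M + 3))) * (2 * sumF M r)) r := by
  rw [iteratedDeriv_two_xi]
  refine ((hasDerivAt_sum_range (fun i : ℕ => (2 * (M : ℝ) + 2 - i) * (i + 1))
    (2 * M + 1) r).const_mul _).congr_deriv ?_
  unfold sumF
  congr 1
  rw [Finset.mul_sum]
  refine Finset.sum_congr rfl fun i _ => ?_
  push_cast
  ring


/-- Let `T ≥ 4` be an even integer.  Then `ξ'(-1) = 1/(2(T-1))`, `ξ''(-1) = 0`,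
`ξ''(ρ) > 0` for every real `ρ > -1`, and `ξ'''(ρ) > 0` for every real `ρ ≥ -1`. -/
theorem stmt_3 (T : ℕ) (hT : 4 ≤ T) (hTeven : Even T) :
    deriv (xi T) (-1) = 1 / (2 * ((T : ℝ) - 1))
    ∧ iteratedDeriv 2 (xi T) (-1) = 0
    ∧ (∀ ρ : ℝ, -1 < ρ → 0 < iteratedDeriv 2 (xi T) ρ)
    ∧ (∀ ρ : ℝ, -1 ≤ ρ → 0 < iteratedDeriv 3 (xi T) ρ) := by
  obtain ⟨M, rfl⟩ : ∃ M, T = 2 * M + 4 := by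
    obtain ⟨k, rfl⟩ := hTeven
    exact ⟨k - 2, by omega⟩
  have third_pos : ∀ ρ : ℝ, -1 ≤ ρ →
      0 < (1 / ((2 * (M : ℝ) + 4) * (2 * M + 3))) * (2 * sumF M ρ) := by
    intro ρ hρ
    have := sumF_pos hρ M
    positivity
  have second_zero : iteratedDeriv 2 (xi (2 * M + 4)) (-1) = 0 := by
    rw [iteratedDeriv_two_xi]
    simp only [sum_second_neg_one, mul_zero]
  refine ⟨?_, second_zero, fun ρ hρ => ?_, fun ρ hρ => ?_⟩
  · rw [deriv_xi]
    simp only [sumK_neg_one]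
    push_cast
    rw [show (2 * (M : ℝ) + 4 - 1) = 2 * M + 3 by ring]
    field_simp
    ring
  · have mono : StrictMonoOn (iteratedDeriv 2 (xi (2 * M + 4))) (Set.Ici (-1)) := by
      refine strictMonoOn_of_deriv_pos (convex_Ici _)
        (fun x _ => (hasDerivAt_iteratedDeriv_two_xi M x).continuousAt.continuousWithinAt) ?_
      intro x hx
      rw [interior_Ici] at hx
      rw [(hasDerivAt_iteratedDeriv_two_xi M x).deriv]
      exact third_pos x (le_of_lt hx)
    rw [← second_zero]
    exact mono Set.self_mem_Ici hρ.le hρ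
  · rw [iteratedDeriv_succ, (hasDerivAt_iteratedDeriv_two_xi M ρ).deriv]
    exact third_pos ρ hρ
end

section
/- For every integer T ≥ 2 and every integer k ≥ 1, the k-th derivative of ξ at the point 1 equals (1/(k(k+1))) · ∏_{j=2}^{k} (T-j) (the empty product for k = 1 being 1). In particular ξ'(1) = 1/2, ξ''(1) = (T-2)/6, ξ'''(1) = (T-2)(T-3)/12, ξ''''(1) = (T-2)(T-3)(T-4)/20 and ξ'''''(1) = (T-2)(T-3)(T-4)(T-5)/30. -/
/-!
Differentiating term by term, the `k`-th derivative of `ξ` at `1` is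
`(1 / (T (T - 1))) ∑ t, ((T - t) / t) t (t - 1) ⋯ (t - k + 1)`. The factor `t` cancels, leaving a
sum of the falling factorials `s (s - 1) ⋯ (s - m + 1)`, with `s = t - 1` and `m = k - 1`, against
the linear weights `n - s`, where `n = T - 1`. This is a twofold iterated sum of falling factorials,
so applying the hockey-stick identity twice (`sum_fall`, `sum_weighted_fall`) evaluates it as
`T (T - 1) ⋯ (T - k) / (k (k + 1))`, and `T (T - 1)` cancels.
-/

open Finset

/-- The falling factorial `x (x - 1) ⋯ (x - m + 1)` of a real number `x`. -/
noncomputable def fall (m : ℕ) (x : ℝ) : ℝ := ∏ j ∈ Finset.range m, (x - (j : ℝ))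

lemma fall_succ (m : ℕ) (x : ℝ) : fall (m + 1) x = fall m x * (x - m) := by
  simp [fall, Finset.prod_range_succ]

lemma fall_succ_left (m : ℕ) (x : ℝ) : fall (m + 1) (x + 1) = (x + 1) * fall m x := by
  simp [fall, Finset.prod_range_succ', mul_comm]

lemma descFactorial_eq_fall (n m : ℕ) : (n.descFactorial m : ℝ) = fall m n := by
  rw [← descPochhammer_eval_eq_descFactorial, descPochhammer_eval_eq_prod_range, fall]

/-- The hockey-stick identity for falling factorials. -/
lemma sum_fall (m n : ℕ) :
    ((m : ℝ) + 1) * ∑ s ∈ Finset.range n, fall m s = fall (m + 1) n := by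
  induction n with
  | zero => simp [fall, Finset.prod_range_succ']
  | succ n ih =>
    rw [Finset.sum_range_succ, mul_add, ih, Nat.cast_succ, fall_succ_left, fall_succ]
    ring

/-- The hockey-stick identity summed once more: passing from `n` to `n + 1` raises each of the
weights `n - s` by one, which adds the sum evaluated by `sum_fall`. -/
lemma sum_weighted_fall (m n : ℕ) :
    ((m : ℝ) + 1) * ((m : ℝ) + 2) * ∑ s ∈ Finset.range n, ((n : ℝ) - s) * fall m s
      = fall (m + 2) ((n : ℝ) + 1) := by
  induction n with
  | zero => simp [fall, Finset.prod_range_succ']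
  | succ n ih =>
    have h : ∑ s ∈ Finset.range (n + 1), (((n + 1 : ℕ) : ℝ) - s) * fall m s
        = ∑ s ∈ Finset.range n, ((n : ℝ) - s) * fall m s
          + ∑ s ∈ Finset.range (n + 1), fall m s := by
      rw [Finset.sum_range_succ, Finset.sum_range_succ (fun s : ℕ => fall m s), ← add_assoc,
        ← Finset.sum_add_distrib]
      congr 1
      · exact Finset.sum_congr rfl fun s _ => by push_cast; ring
      · push_cast; ring
    have h2 := sum_fall m (n + 1)
    rw [h, mul_add, ih]
    rw [Nat.cast_succ] at h2 ⊢
    have e1 := fall_succ_left (m + 1) ((n : ℝ) + 1)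
    have e2 := fall_succ (m + 1) ((n : ℝ) + 1)
    push_cast at e1 e2
    linear_combination ((m : ℝ) + 2) * h2 + e2 - e1

lemma fall_eq_prod_Icc (m : ℕ) (x : ℝ) :
    fall (m + 2) x = x * (x - 1) * ∏ j ∈ Finset.Icc 2 (m + 1), (x - (j : ℝ)) := by
  induction m with
  | zero => simp [fall, Finset.prod_range_succ]
  | succ m ih =>
    rw [fall_succ, ih, Finset.prod_Icc_succ_top (by lia : 2 ≤ m + 1 + 1)]
    push_cast
    ring

lemma iteratedDeriv_xi (T k : ℕ) :
    iteratedDeriv k (xi T) 1 = (1 / ((T : ℝ) * ((T : ℝ) - 1))) *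
      ∑ t ∈ Finset.Icc 1 (T - 1), (((T : ℝ) - (t : ℝ)) / (t : ℝ)) * (t.descFactorial k : ℝ) := by
  unfold xi
  rw [iteratedDeriv_const_mul_field, iteratedDeriv_fun_sum (fun t _ => by fun_prop)]
  congr 1
  refine Finset.sum_congr rfl fun t _ => ?_
  rw [iteratedDeriv_const_mul_field]
  simp

/-- The derivatives of order `m + 1` at `1`; writing `t = s + 1`, the factor `1 / t` in the
coefficient cancels against `(s + 1).descFactorial (m + 1) = (s + 1) * s.descFactorial m`. -/
lemma iteratedDeriv_succ_xi (T : ℕ) (hT : 2 ≤ T) (m : ℕ) :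
    iteratedDeriv (m + 1) (xi T) 1 = (1 / (((m + 1 : ℕ) : ℝ) * (((m + 1 : ℕ) : ℝ) + 1))) *
      ∏ j ∈ Finset.Icc 2 (m + 1), ((T : ℝ) - (j : ℝ)) := by
  obtain ⟨n, rfl⟩ : ∃ n, T = n + 1 := ⟨T - 1, by lia⟩
  have hn : (n : ℝ) ≠ 0 := by
    have : n ≠ 0 := by lia
    exact_mod_cast this
  have hsum : ∑ t ∈ Finset.Icc 1 (n + 1 - 1),
      ((((n + 1 : ℕ) : ℝ) - (t : ℝ)) / (t : ℝ)) * (t.descFactorial (m + 1) : ℝ)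
      = ∑ s ∈ Finset.range n, ((n : ℝ) - s) * fall m s := by
    have hI : Finset.Icc 1 (n + 1 - 1) = Finset.Ico 1 (n + 1) := by ext; simp
    rw [hI, Finset.sum_Ico_eq_sum_range]
    refine Finset.sum_congr rfl fun s _ => ?_
    rw [add_comm 1 s, Nat.succ_descFactorial_succ, ← descFactorial_eq_fall]
    have hs : (s : ℝ) + 1 ≠ 0 := by positivity
    push_cast
    field_simp
    ring
  have key := sum_weighted_fall m n
  rw [fall_eq_prod_Icc] at key
  rw [iteratedDeriv_xi, hsum]
  push_cast
  have h1 : (n : ℝ) + 1 ≠ 0 := by positivity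
  have h2 : (m : ℝ) + 1 ≠ 0 := by positivity
  have h3 : (m : ℝ) + 1 + 1 ≠ 0 := by positivity
  have h4 : (n : ℝ) + 1 - 1 ≠ 0 := by simpa using hn
  field_simp
  linear_combination key

/-- For every integer `T ≥ 2` and every integer `k ≥ 1`, the `k`-th derivative of
`ξ` at `1` equals `(1/(k(k+1))) · ∏_{j=2}^{k} (T-j)` (the empty product for `k = 1`
being `1`).  In particular `ξ'(1) = 1/2`, `ξ''(1) = (T-2)/6`,
`ξ'''(1) = (T-2)(T-3)/12`, `ξ''''(1) = (T-2)(T-3)(T-4)/20` and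
`ξ'''''(1) = (T-2)(T-3)(T-4)(T-5)/30`. -/
theorem stmt_5 (T : ℕ) (hT : 2 ≤ T) :
    (∀ k : ℕ, 1 ≤ k →
      iteratedDeriv k (xi T) 1
        = (1 / ((k : ℝ) * ((k : ℝ) + 1))) * ∏ j ∈ Finset.Icc 2 k, ((T : ℝ) - (j : ℝ)))
    ∧ deriv (xi T) 1 = 1 / 2
    ∧ iteratedDeriv 2 (xi T) 1 = ((T : ℝ) - 2) / 6
    ∧ iteratedDeriv 3 (xi T) 1 = ((T : ℝ) - 2) * ((T : ℝ) - 3) / 12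
    ∧ iteratedDeriv 4 (xi T) 1 = ((T : ℝ) - 2) * ((T : ℝ) - 3) * ((T : ℝ) - 4) / 20
    ∧ iteratedDeriv 5 (xi T) 1
        = ((T : ℝ) - 2) * ((T : ℝ) - 3) * ((T : ℝ) - 4) * ((T : ℝ) - 5) / 30 := by
  have main : ∀ k : ℕ, 1 ≤ k →
      iteratedDeriv k (xi T) 1
        = (1 / ((k : ℝ) * ((k : ℝ) + 1))) * ∏ j ∈ Finset.Icc 2 k, ((T : ℝ) - (j : ℝ)) := by
    intro k hk
    obtain ⟨m, rfl⟩ : ∃ m, k = m + 1 := ⟨k - 1, by lia⟩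
    exact iteratedDeriv_succ_xi T hT m
  refine ⟨main, ?_, ?_, ?_, ?_, ?_⟩
  · rw [← iteratedDeriv_one, main 1 le_rfl]
    norm_num
  all_goals
    rw [main _ (by norm_num)]
    norm_num [Finset.prod_Icc_succ_top]
    try ring
end

section
/- For every integer T ≥ 2, trace(Φ(1)ᵀ · Q · Φ(1)) = (T-1)(T+1)/6. -/
/-!
Column `j` of `Φ(1)` is a 0/1 vector with `m = T - 1 - j` ones, so its centred sum of squares, which
is the `j`-th diagonal entry of `Φ(1)ᵀ Q Φ(1)`, equals `m - m² / T`. As `j` runs over the columns,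
`m` runs over `0, …, T - 1`, and the trace is
`T (T - 1) / 2 - (T - 1) (2 T - 1) / 6 = (T - 1) (T + 1) / 6`.
-/

open Finset Matrix

/-- The `T×T` centering projection matrix `Q = I_T - (1/T)·ι ιᵀ`, with entries
`δ_{ij} - 1/T`. -/
noncomputable def Qmat (T : ℕ) : Matrix (Fin T) (Fin T) ℝ :=
  fun i j => (if i = j then 1 else 0) - 1 / (T : ℝ)

/-- The `T×T` matrix `Φ(ρ)` whose `(i,j)` entry is `ρ^{i-j-1}` when `i > j` and
`0` otherwise. -/
noncomputable def Phi (T : ℕ) (ρ : ℝ) : Matrix (Fin T) (Fin T) ℝ :=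
  fun i j => if (j : ℕ) < (i : ℕ) then ρ ^ ((i : ℕ) - (j : ℕ) - 1) else 0

/-- The quadratic form of the centering matrix is the centred sum of squares. -/
lemma Qmat_quadForm (T : ℕ) (a : Fin T → ℝ) :
    ∑ k, (∑ i, a i * Qmat T i k) * a k = ∑ i, a i ^ 2 - (∑ i, a i) ^ 2 / T := by
  have h : ∀ k, ∑ i, a i * Qmat T i k = a k - (∑ i, a i) / T := by
    intro k
    simp [Qmat, mul_sub, Finset.sum_sub_distrib, Finset.sum_mul, div_eq_mul_inv]
  simp only [h, sub_mul, Finset.sum_sub_distrib, ← Finset.mul_sum]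
  congr 1
  · simp only [pow_two]
  · ring

lemma Phi_one_apply (T : ℕ) (i j : Fin T) :
    Phi T 1 i j = if j < i then 1 else 0 := by
  simp [Phi]

lemma sum_Phi_one_col (T : ℕ) (j : Fin T) :
    ∑ i, Phi T 1 i j = ((T - 1 - (j : ℕ) : ℕ) : ℝ) := by
  simp only [Phi_one_apply, Finset.sum_boole]
  rw [Finset.filter_lt_eq_Ioi, Fin.card_Ioi]

lemma sum_range_sub_sq_div (c : ℝ) (n : ℕ) :
    ∑ m ∈ Finset.range n, ((m : ℝ) - (m : ℝ) ^ 2 / c)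
      = (n : ℝ) * (n - 1) / 2 - (n : ℝ) * (n - 1) * (2 * n - 1) / 6 / c := by
  induction n with
  | zero => simp
  | succ n ih => rw [Finset.sum_range_succ, ih]; push_cast; ring

/-- For every integer `T ≥ 2`, `trace(Φ(1)ᵀ · Q · Φ(1)) = (T-1)(T+1)/6`. -/
theorem stmt_6 (T : ℕ) (hT : 2 ≤ T) :
    Matrix.trace ((Phi T 1)ᵀ * Qmat T * Phi T 1)
      = ((T : ℝ) - 1) * ((T : ℝ) + 1) / 6 := by
  have hT0 : (T : ℝ) ≠ 0 := by positivity
  have hdiag : ∀ j : Fin T, ((Phi T 1)ᵀ * Qmat T * Phi T 1) j j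
      = ((T - 1 - (j : ℕ) : ℕ) : ℝ) - ((T - 1 - (j : ℕ) : ℕ) : ℝ) ^ 2 / T := by
    intro j
    -- the entries are 0 or 1, hence equal to their squares
    have hsq : ∀ i, Phi T 1 i j ^ 2 = Phi T 1 i j := by
      intro i
      simp [Phi_one_apply]
    have h := Qmat_quadForm T (fun i => Phi T 1 i j)
    simp only [hsq, sum_Phi_one_col] at h
    simpa only [Matrix.mul_apply, Matrix.transpose_apply] using h
  simp only [Matrix.trace, Matrix.diag_apply, hdiag]
  rw [Fin.sum_univ_eq_sum_range
      (fun j => ((T - 1 - j : ℕ) : ℝ) - ((T - 1 - j : ℕ) : ℝ) ^ 2 / T) T,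
    Finset.sum_range_reflect (fun m => (m : ℝ) - (m : ℝ) ^ 2 / T) T, sum_range_sub_sq_div]
  field_simp
  ring
end

section
/- For every integer T ≥ 2, trace(Q · Φ(1) · Q · Φ(1)) = -(T-1)(T-5)/12. -/
/-!
The `j`-th column of `Φ(1)` sums to `T - 1 - j` (with `j` counted from `0`), so centering gives
`(Q Φ(1)) i j = [j < i] - c j` with `c j = (T - 1 - j) / T`. In the trace of the square,
`∑ i j, ([j < i] - c j) * ([i < j] - c i)`, the product of the two indicators vanishes and each
cross term contributes `-∑ i, i * c i`, since row `i` of `Φ(1)` sums to `i`. Hence the trace is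
`(∑ c)² - 2 ∑ i * c i = (T - 1)² / 4 - (T - 1)(T - 2) / 3`.
-/

open Finset Matrix

lemma row_sum (T : ℕ) (i : Fin T) :
    ∑ j : Fin T, (if (j : ℕ) < (i : ℕ) then (1 : ℝ) else 0) = (i : ℕ) := by
  have h : (univ.filter fun j : Fin T => (j : ℕ) < (i : ℕ)) = Finset.Iio i := by
    ext j
    simp
  rw [Finset.sum_boole, h, Fin.card_Iio]

lemma col_sum (T : ℕ) (j : Fin T) :
    ∑ i : Fin T, (if (j : ℕ) < (i : ℕ) then (1 : ℝ) else 0) = (T : ℝ) - 1 - (j : ℕ) := by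
  have h : (univ.filter fun i : Fin T => (j : ℕ) < (i : ℕ)) = Finset.Ioi j := by
    ext i
    simp
  have hj : T = (T - 1 - (j : ℕ)) + 1 + (j : ℕ) := by omega
  have hR : (T : ℝ) = ((T - 1 - (j : ℕ) : ℕ) : ℝ) + 1 + (j : ℕ) := by exact_mod_cast hj
  rw [Finset.sum_boole, h, Fin.card_Ioi]
  linarith

lemma Qmat_mul_Phi_one (T : ℕ) (i j : Fin T) :
    (Qmat T * Phi T 1) i j
      = (if (j : ℕ) < (i : ℕ) then 1 else 0) - ((T : ℝ) - 1 - (j : ℕ)) / T := by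
  simp only [Matrix.mul_apply, Qmat, Phi, one_pow, sub_mul, Finset.sum_sub_distrib]
  rw [← Finset.mul_sum, col_sum]
  simp only [ite_mul, one_mul, zero_mul, Finset.sum_ite_eq, Finset.mem_univ, if_true]
  ring

lemma sum_val (T : ℕ) : ∑ i : Fin T, ((i : ℕ) : ℝ) = T * ((T : ℝ) - 1) / 2 := by
  rw [Fin.sum_univ_eq_sum_range (fun n => (n : ℝ))]
  induction T with
  | zero => simp
  | succ n ih =>
    rw [Finset.sum_range_succ, ih]
    push_cast
    ring

lemma sum_val_sq (T : ℕ) :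
    ∑ i : Fin T, ((i : ℕ) : ℝ) ^ 2 = T * ((T : ℝ) - 1) * (2 * T - 1) / 6 := by
  rw [Fin.sum_univ_eq_sum_range (fun n => (n : ℝ) ^ 2)]
  induction T with
  | zero => simp
  | succ n ih =>
    rw [Finset.sum_range_succ, ih]
    push_cast
    ring

/-- The trace of the square of an array `[j < i] - c j`, for arbitrary column shifts `c`. -/
lemma sum_indicator_sub (T : ℕ) (c : Fin T → ℝ) :
    ∑ i : Fin T, ∑ j : Fin T, ((if (j : ℕ) < (i : ℕ) then (1 : ℝ) else 0) - c j)
        * ((if (i : ℕ) < (j : ℕ) then 1 else 0) - c i)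
      = (∑ i, c i) ^ 2 - 2 * ∑ i : Fin T, ((i : ℕ) : ℝ) * c i := by
  have h : ∀ i j : Fin T, ((if (j : ℕ) < (i : ℕ) then (1 : ℝ) else 0) - c j)
        * ((if (i : ℕ) < (j : ℕ) then 1 else 0) - c i)
      = c i * c j - (if (j : ℕ) < (i : ℕ) then 1 else 0) * c i
        - (if (i : ℕ) < (j : ℕ) then 1 else 0) * c j := by
    intro i j
    split_ifs <;> first | omega | ring
  simp only [h, Finset.sum_sub_distrib]
  -- The last double sum is the middle one with the two indices exchanged.
  rw [Finset.sum_comm (f := fun i j : Fin T =>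
    (if (i : ℕ) < (j : ℕ) then (1 : ℝ) else 0) * c j)]
  simp only [← Finset.sum_mul, row_sum, ← Finset.mul_sum]
  ring

/-- For every integer `T ≥ 2`, `trace(Q · Φ(1) · Q · Φ(1)) = -(T-1)(T-5)/12`. -/
theorem stmt_8 (T : ℕ) (hT : 2 ≤ T) :
    Matrix.trace (Qmat T * Phi T 1 * Qmat T * Phi T 1)
      = -(((T : ℝ) - 1) * ((T : ℝ) - 5)) / 12 := by
  have hT0 : (T : ℝ) ≠ 0 := by
    have : T ≠ 0 := by omega
    exact_mod_cast this
  have h1 : ∑ i : Fin T, ((T : ℝ) - 1 - (i : ℕ)) / T = ((T : ℝ) - 1) / 2 := by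
    rw [← Finset.sum_div, Finset.sum_sub_distrib, sum_val]
    simp only [Finset.sum_const, Finset.card_univ, Fintype.card_fin, nsmul_eq_mul]
    field_simp
    ring
  have h2 : ∑ i : Fin T, ((i : ℕ) : ℝ) * (((T : ℝ) - 1 - (i : ℕ)) / T)
      = ((T : ℝ) - 1) * (T - 2) / 6 := by
    have h : ∀ i : Fin T, ((i : ℕ) : ℝ) * (((T : ℝ) - 1 - (i : ℕ)) / T)
        = (((i : ℕ) : ℝ) * ((T : ℝ) - 1) - ((i : ℕ) : ℝ) ^ 2) / T := fun i => by ring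
    simp only [h]
    rw [← Finset.sum_div, Finset.sum_sub_distrib, ← Finset.sum_mul, sum_val, sum_val_sq]
    field_simp
    ring
  rw [Matrix.mul_assoc (Qmat T * Phi T 1)]
  simp only [Matrix.trace, Matrix.diag_apply]
  simp only [Matrix.mul_apply (M := Qmat T * Phi T 1), Qmat_mul_Phi_one]
  rw [sum_indicator_sub T (fun i => ((T : ℝ) - 1 - (i : ℕ)) / T), h1, h2]
  ring
end

section
/- For every integer T ≥ 2, trace(Φ(1)ᵀ · Q · Φ(1) · Q · Φ(1)) = -(T-1)(T+1)/12. -/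
/-!
Write `Φ = Φ(1)` and `J = ι ιᵀ`. Since `Φ + Φᵀ = J - I`, `Q J = 0` and `Q² = Q`, one has
`Q (Φ + Φᵀ) Q = -Q` (`Qmat_mul_symm_mul_Qmat`). The trace of `Φᵀ Q Φ Q Φ` equals that of its
transpose `Φᵀ Q Φᵀ Q Φ`, so twice the trace is `tr (Φᵀ Q (Φ + Φᵀ) Q Φ) = -tr (Φᵀ Q Φ)`.
The latter only involves the column sums `T - 1 - j` of the 0-1 matrix `Φ`:
`tr (Φᵀ Q Φ) = ∑ⱼ (T - 1 - j) - (1/T) ∑ⱼ (T - 1 - j)² = (T - 1)(T + 1)/6`.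
-/

open Finset Matrix

/-- The all-ones matrix `ι ιᵀ`. -/
def onesMat (T : ℕ) : Matrix (Fin T) (Fin T) ℝ := fun _ _ => 1

lemma Qmat_eq (T : ℕ) : Qmat T = 1 - (1 / (T : ℝ)) • onesMat T := by
  ext i j
  simp [Qmat, onesMat, Matrix.one_apply]

lemma Qmat_transpose (T : ℕ) : (Qmat T)ᵀ = Qmat T := by
  ext i j
  simp [Qmat, eq_comm]

lemma onesMat_mul_self (T : ℕ) : onesMat T * onesMat T = (T : ℝ) • onesMat T := by
  ext i j
  simp [onesMat, Matrix.mul_apply]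

lemma Qmat_mul_onesMat (T : ℕ) (hT : (T : ℝ) ≠ 0) : Qmat T * onesMat T = 0 := by
  rw [Qmat_eq, sub_mul, one_mul, smul_mul_assoc, onesMat_mul_self, smul_smul,
    one_div_mul_cancel hT, one_smul, sub_self]

lemma Qmat_mul_self (T : ℕ) (hT : (T : ℝ) ≠ 0) : Qmat T * Qmat T = Qmat T := by
  nth_rewrite 2 [Qmat_eq]
  rw [mul_sub, mul_one, mul_smul_comm, Qmat_mul_onesMat T hT, smul_zero, sub_zero]

lemma Phi_add_transpose (T : ℕ) : Phi T 1 + (Phi T 1)ᵀ = onesMat T - 1 := by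
  ext i j
  simp only [Matrix.add_apply, Matrix.transpose_apply, Phi_one_apply, Matrix.sub_apply,
    onesMat, Matrix.one_apply]
  rcases lt_trichotomy i j with h | h | h
  · simp [h, h.not_gt, h.ne]
  · simp [h]
  · simp [h, h.not_gt, h.ne']

lemma Qmat_mul_symm_mul_Qmat (T : ℕ) (hT : (T : ℝ) ≠ 0) :
    Qmat T * (Phi T 1 + (Phi T 1)ᵀ) * Qmat T = -Qmat T := by
  rw [Phi_add_transpose, mul_sub, Qmat_mul_onesMat T hT, mul_one, zero_sub, neg_mul,
    Qmat_mul_self T hT]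

lemma sum_Phi_col (T : ℕ) (j : Fin T) : ∑ i, Phi T 1 i j = (T : ℝ) - 1 - (j : ℕ) := by
  simp only [Phi_one_apply]
  rw [Finset.sum_boole, Finset.filter_lt_eq_Ioi, Fin.card_Ioi]
  have := j.isLt
  rw [Nat.cast_sub (by omega), Nat.cast_sub (by omega)]
  simp

lemma sum_range_sub (a : ℝ) (n : ℕ) :
    ∑ j ∈ Finset.range n, (a - j) = n * a - n * (n - 1) / 2 := by
  induction n with
  | zero => simp
  | succ k ih => rw [Finset.sum_range_succ, ih]; push_cast; ring

lemma sum_range_sub_sq (a : ℝ) (n : ℕ) :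
    ∑ j ∈ Finset.range n, (a - j) ^ 2
      = n * a ^ 2 - a * n * (n - 1) + n * (n - 1) * (2 * n - 1) / 6 := by
  induction n with
  | zero => simp
  | succ k ih => rw [Finset.sum_range_succ, ih]; push_cast; ring

lemma trace_gram (T : ℕ) :
    Matrix.trace ((Phi T 1)ᵀ * Phi T 1) = ∑ j : Fin T, ((T : ℝ) - 1 - (j : ℕ)) := by
  simp only [Matrix.trace, Matrix.diag_apply, Matrix.mul_apply, Matrix.transpose_apply]
  refine Finset.sum_congr rfl fun j _ => ?_
  rw [← sum_Phi_col]
  refine Finset.sum_congr rfl fun i _ => ?_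
  simp [Phi_one_apply]

lemma trace_ones (T : ℕ) :
    Matrix.trace ((Phi T 1)ᵀ * onesMat T * Phi T 1)
      = ∑ j : Fin T, ((T : ℝ) - 1 - (j : ℕ)) ^ 2 := by
  simp only [Matrix.trace, Matrix.diag_apply, Matrix.mul_apply, Matrix.transpose_apply, onesMat,
    mul_one]
  refine Finset.sum_congr rfl fun j _ => ?_
  rw [← Finset.mul_sum, sum_Phi_col, sq]

lemma trace_Phi_Q_Phi (T : ℕ) (hT : (T : ℝ) ≠ 0) :
    Matrix.trace ((Phi T 1)ᵀ * Qmat T * Phi T 1) = ((T : ℝ) - 1) * (T + 1) / 6 := by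
  rw [Qmat_eq, mul_sub, sub_mul, mul_one, mul_smul_comm, smul_mul_assoc, Matrix.trace_sub,
    Matrix.trace_smul, trace_gram, trace_ones,
    Fin.sum_univ_eq_sum_range (fun j => (T : ℝ) - 1 - j) T,
    Fin.sum_univ_eq_sum_range (fun j => ((T : ℝ) - 1 - j) ^ 2) T,
    sum_range_sub, sum_range_sub_sq, smul_eq_mul]
  field_simp
  ring

/-- For every integer `T ≥ 2`,
`trace(Φ(1)ᵀ · Q · Φ(1) · Q · Φ(1)) = -(T-1)(T+1)/12`. -/
theorem stmt_10 (T : ℕ) (hT : 2 ≤ T) :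
    Matrix.trace ((Phi T 1)ᵀ * Qmat T * Phi T 1 * Qmat T * Phi T 1)
      = -(((T : ℝ) - 1) * ((T : ℝ) + 1)) / 12 := by
  have hT0 : (T : ℝ) ≠ 0 := by
    have : T ≠ 0 := by omega
    exact_mod_cast this
  have h1 : Matrix.trace ((Phi T 1)ᵀ * Qmat T * Phi T 1 * Qmat T * Phi T 1)
      = Matrix.trace ((Phi T 1)ᵀ * Qmat T * (Phi T 1)ᵀ * Qmat T * Phi T 1) := by
    rw [← Matrix.trace_transpose]
    simp only [Matrix.transpose_mul, Matrix.transpose_transpose, Qmat_transpose, Matrix.mul_assoc]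
  have h2 : (Phi T 1)ᵀ * Qmat T * Phi T 1 * Qmat T * Phi T 1
      + (Phi T 1)ᵀ * Qmat T * (Phi T 1)ᵀ * Qmat T * Phi T 1
      = -((Phi T 1)ᵀ * Qmat T * Phi T 1) := by
    calc _ = (Phi T 1)ᵀ * (Qmat T * (Phi T 1 + (Phi T 1)ᵀ) * Qmat T) * Phi T 1 := by
          noncomm_ring
      _ = _ := by rw [Qmat_mul_symm_mul_Qmat T hT0, mul_neg, neg_mul]
  have h3 := congrArg Matrix.trace h2
  rw [Matrix.trace_add, Matrix.trace_neg, ← h1, trace_Phi_Q_Phi T hT0] at h3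
  linarith
end

section
/- Let T ≥ 2 be an integer, let ρ ∈ [-1, 1), and let u > 0 be a real number with u·trace(Φ(ρ)ᵀQΦ(ρ)) ≤ T-1, the inequality being strict in case T = 2. Set m = ρ - u·ξ'(ρ), c = u - u²·ξ'(ρ)², and define L(r) = (T-1)·ξ(r) - ((T-1)/2)·log(c + (r-m)²) for r ∈ [-1, ∞). Then c > 0; L'(ρ) = 0 and L''(ρ) < 0; L has exactly two stationary points ρ₁ < ρ₂ in [-1, ∞), with ρ₁ = ρ; L attains a strict local maximum at ρ and a strict local minimum at ρ₂; and L has no other local extrema and no stationary point of inflection in [-1, ∞). -/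
/-!
Write `p = ξ'`, `x = r - m`. Then `L'(r) = (T - 1) (p - x / (c + x²))`, which on `[-1, ∞)`, where
`p > 0`, is a positive multiple of `G(r) = c + x² - x / p`. The derivative of `G` is `H / p²` with
`H = x (p' + 2 p²) - p`.

* By construction `G(ρ) = 0`, and `H(ρ) < 0` says `u (p'(ρ) + 2 p(ρ)²) < 1`. This follows from the
  trace condition and `(T - 1) (p' + 2 p²) ≤ tr(ΦᵀQΦ)` (`le_trace`), strict for `T ≥ 3`, `ρ ≠ 1`.
  Let `E = Φ + Φᵀ` have column sums `a_j`. With the identities `T (T - 1) p = ∑ S_k` and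
  `T (T - 1) p' = ∑ S_j S_{T-1-j}` for the geometric sums `S_k`, the inequality reads
  `‖E‖² ≥ ∑ a_j² / T + (∑ a_j)² / (T² (T - 1))`. It is Cauchy–Schwarz applied twice: within a
  column, where one of the `T` entries vanishes, so that `∑ a_j² ≤ (T - 1) ‖E‖²`, and across the
  columns, `(∑ a_j)² ≤ T ∑ a_j²`.
* Once `H` is nonnegative on `[-1, ∞)` it stays positive (`H_pos_of_nonneg`): `H ≥ 0` forces
  `x > 0`, and then `H' = 2 p² + x (p'' + 4 p p') > 0` wherever `p'' ≥ 0`, which holds on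
  `[-1/2, ∞)`, and everywhere for `T ≤ 4`. For `T ≥ 5` the lower bound `m ≥ -1 - 1 / (T - 1)`
  (from `u_mul_U_le`) excludes `H ≥ 0` on `[-1, -1/2)`.

By Rolle's theorem `G` then has exactly one more zero `ρ₂`, and it lies to the right of `ρ`, since
`G → ∞` (`exists_second_zero`). The sign of `G`, hence of `L'`, around `ρ₂` gives the strict local
minimum. At `ρ` the strict local maximum comes from `L'(ρ) = 0` and `L''(ρ) < 0`, which also covers
the left side of `ρ = -1`, where the sign of `p` is not controlled.
-/


open Finset Matrix

/-! ### Geometric sums and the numerator of `ξ'` -/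

namespace PanelAR

/-- The geometric sum `1 + r + ⋯ + r^(k-1)`. -/
noncomputable def S (r : ℝ) (k : ℕ) : ℝ := ∑ i ∈ range k, r ^ i

/-- The sum of squares `1 + r² + ⋯ + r^(2(k-1))` of the terms of `S r k`. -/
noncomputable def R (r : ℝ) (k : ℕ) : ℝ := ∑ i ∈ range k, (r ^ i) ^ 2

/-- The numerator `∑_{k<n} S r k` of `ξ'`, given by the recursion it satisfies in `n`. -/
noncomputable def U : ℕ → ℝ → ℝ
  | 0, _ => 0
  | n + 1, r => n + r * U n r

/-- The derivative of `U n`, given by differentiating the recursion for `U`. -/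
noncomputable def U1 : ℕ → ℝ → ℝ
  | 0, _ => 0
  | n + 1, r => U n r + r * U1 n r

/-- The second derivative of `U n`, given by differentiating the recursion for `U` twice. -/
noncomputable def U2 : ℕ → ℝ → ℝ
  | 0, _ => 0
  | n + 1, r => 2 * U1 n r + r * U2 n r

lemma hasDerivAt_U (n : ℕ) (r : ℝ) : HasDerivAt (U n) (U1 n r) r := by
  induction n with
  | zero => exact hasDerivAt_const r (0 : ℝ)
  | succ n ih =>
    have h := ((hasDerivAt_id r).mul ih).const_add (n : ℝ)
    simp only [id, one_mul] at h
    exact h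

lemma hasDerivAt_U1 (n : ℕ) (r : ℝ) : HasDerivAt (U1 n) (U2 n r) r := by
  induction n with
  | zero => exact hasDerivAt_const r (0 : ℝ)
  | succ n ih =>
    have h := (hasDerivAt_U n r).add ((hasDerivAt_id r).mul ih)
    simp only [id, one_mul] at h
    rw [U2, two_mul, add_assoc]
    exact h

lemma S_zero (r : ℝ) : S r 0 = 0 := by simp [S]

lemma S_succ (r : ℝ) (k : ℕ) : S r (k + 1) = 1 + r * S r k := by
  simp only [S, sum_range_succ', mul_sum, pow_zero, pow_succ']
  ring

lemma S_succ' (r : ℝ) (k : ℕ) : S r (k + 1) = S r k + r ^ k := by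
  simp [S, sum_range_succ]

lemma R_succ (r : ℝ) (k : ℕ) : R r (k + 1) = R r k + (r ^ k) ^ 2 := by
  simp [R, sum_range_succ]

lemma one_sub_mul_S (r : ℝ) (k : ℕ) : (1 - r) * S r k = 1 - r ^ k := by
  induction k with
  | zero => simp [S_zero]
  | succ k ih => rw [S_succ', mul_add, ih]; ring

lemma U_eq_sum (n : ℕ) (r : ℝ) : U n r = ∑ k ∈ range n, S r k := by
  induction n with
  | zero => simp [U]
  | succ n ih =>
    rw [sum_range_succ']
    simp only [S_succ, S_zero, sum_add_distrib, ← mul_sum, ← ih, U]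
    simp

/-- The recursion `U1 (n+1) = U n + r U1 n` is that of the self-convolution of `S r`. -/
lemma U1_succ_eq_sum (n : ℕ) (r : ℝ) :
    U1 (n + 1) r = ∑ j ∈ range (n + 1), S r j * S r (n - j) := by
  induction n with
  | zero => simp [U1, U, S_zero]
  | succ n ih =>
    rw [sum_range_succ']
    simp only [S_zero, zero_mul, add_zero, S_succ, Nat.reduceSubDiff, add_mul, one_mul,
      sum_add_distrib, mul_assoc, ← mul_sum, ← ih]
    have h := sum_range_reflect (S r) (n + 1)
    simp only [Nat.add_sub_cancel] at h
    rw [h, ← U_eq_sum, U1]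

lemma U1_eq_sum (n : ℕ) (r : ℝ) :
    U1 n r = ∑ j ∈ range n, S r j * S r (n - 1 - j) := by
  cases n with
  | zero => simp [U1]
  | succ n => simpa using U1_succ_eq_sum n r

lemma one_sub_mul_U (n : ℕ) (r : ℝ) : (1 - r) * U n r = n - S r n := by
  induction n with
  | zero => simp [U, S_zero]
  | succ n ih =>
    rw [S_succ, U]
    push_cast
    linear_combination r * ih

lemma one_sub_sq_mul_U1 (n : ℕ) (r : ℝ) :
    (1 - r) ^ 2 * U1 (n + 1) r = (n + 1) - 2 * S r (n + 1) + (n + 1) * r ^ n := by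
  induction n with
  | zero => simp [U1, U, S_succ, S_zero]; norm_num
  | succ n ih =>
    rw [S_succ, U1]
    have h1 := one_sub_mul_U (n + 1) r
    have h2 := one_sub_mul_S r (n + 1)
    push_cast at h1 ⊢
    linear_combination r * ih + (1 - r) * h1 - h2

lemma S_nonneg {r : ℝ} (hr : -1 ≤ r) (k : ℕ) : 0 ≤ S r k := by
  rcases le_or_gt 0 r with h | h
  · exact sum_nonneg fun i _ => pow_nonneg h i
  · have h1 := one_sub_mul_S r k
    have h2 : r ^ k ≤ 1 := (le_abs_self _).trans (by
      rw [abs_pow]; exact pow_le_one₀ (abs_nonneg r) (abs_le.2 ⟨hr, by linarith⟩))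
    by_contra! hc
    nlinarith

lemma S_le_one {r : ℝ} (hr : -1 ≤ r) (hr0 : r ≤ 0) (k : ℕ) : S r k ≤ 1 := by
  cases k with
  | zero => simp [S_zero]
  | succ k =>
    rw [S_succ]
    nlinarith [S_nonneg hr k]

lemma one_le_U {r : ℝ} (hr : -1 ≤ r) {n : ℕ} (hn : 2 ≤ n) : 1 ≤ U n r := by
  rw [U_eq_sum]
  have h := single_le_sum (f := S r) (s := range n) (fun i _ => S_nonneg hr i)
    (mem_range.2 (show 1 < n by omega))
  simpa [S_succ, S_zero] using h

lemma U_nonneg {r : ℝ} (hr : -1 ≤ r) (n : ℕ) : 0 ≤ U n r := by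
  rw [U_eq_sum]
  exact sum_nonneg fun i _ => S_nonneg hr i

lemma U1_nonneg {r : ℝ} (hr : -1 ≤ r) (n : ℕ) : 0 ≤ U1 n r := by
  rw [U1_eq_sum]
  exact sum_nonneg fun i _ => mul_nonneg (S_nonneg hr _) (S_nonneg hr _)

/-- After multiplication by `(1 - r)²` the difference `U n - U1 n` equals
`n (-r - r ^ (n - 1)) + (1 + r) S r n`. -/
lemma U1_le_U {r : ℝ} (hr : -1 ≤ r) (hr0 : r ≤ 0) {n : ℕ} (hn : 2 ≤ n) :
    U1 n r ≤ U n r := by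
  obtain ⟨k, rfl⟩ : ∃ k, n = k + 2 := ⟨n - 2, by omega⟩
  have h1 := one_sub_mul_U (k + 2) r
  have h2 := one_sub_sq_mul_U1 (k + 1) r
  have h3 := S_nonneg hr (k + 2)
  -- `|r ^ (k + 1)| ≤ |r|`
  have h4 : r ^ (k + 1) ≤ -r := (le_abs_self _).trans (by
    rw [abs_pow, abs_of_nonpos hr0]
    exact pow_le_of_le_one (by linarith) (by linarith) (by omega))
  have h5 : (1 - r) ^ 2 * (U (k + 2) r - U1 (k + 2) r)
      = ((k : ℝ) + 2) * (-r - r ^ (k + 1)) + (1 + r) * S r (k + 2) := by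
    push_cast at h1 h2
    linear_combination (1 - r) * h1 - h2
  have h6 : 0 ≤ (1 - r) ^ 2 * (U (k + 2) r - U1 (k + 2) r) := by
    rw [h5]
    have := mul_nonneg (by positivity : (0 : ℝ) ≤ (k : ℝ) + 2) (sub_nonneg.2 h4)
    have := mul_nonneg (by linarith : (0 : ℝ) ≤ 1 + r) h3
    linarith
  exact sub_nonneg.1 (nonneg_of_mul_nonneg_right h6 (by nlinarith))

/-- For `r ≥ 0` every term of the recursion is nonnegative. On `[-1/2, 0)` the recursion
preserves the pair `U2 n ≥ 0`, `U2 (n+1) ≥ 0`, because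
`U2 (n+2) = 2 (U n + 2 r U1 n) + r² U2 n` and `U n + 2 r U1 n ≥ 0` there. -/
lemma U2_nonneg {r : ℝ} (hr : -1 / 2 ≤ r) (n : ℕ) : 0 ≤ U2 n r := by
  rcases le_or_gt 0 r with h0 | h0
  · induction n with
    | zero => simp [U2]
    | succ n ih =>
      rw [U2]
      have := U1_nonneg (by linarith : -1 ≤ r) n
      positivity
  · have hr1 : -1 ≤ r := by linarith
    have hZ : ∀ n, 0 ≤ U n r + 2 * r * U1 n r := by
      intro n
      cases n with
      | zero => simp [U, U1]
      | succ n =>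
        rw [U, U1]
        have h1 := one_sub_mul_U n r
        have h2 := S_nonneg hr1 n
        have h3 := mul_nonneg (sq_nonneg r) (U1_nonneg hr1 n)
        have h4 := mul_nonneg (by linarith : 0 ≤ 1 + 2 * r) (U_nonneg hr1 n)
        nlinarith
    have hY : ∀ n, 0 ≤ U2 n r ∧ 0 ≤ U2 (n + 1) r := by
      intro n
      induction n with
      | zero => simp [U2, U1]
      | succ n ih =>
        refine ⟨ih.2, ?_⟩
        have h : U2 (n + 1 + 1) r = 2 * (U n r + 2 * r * U1 n r) + r ^ 2 * U2 n r := by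
          simp only [U2, U1]; ring
        rw [h]
        have := hZ n
        have := mul_nonneg (sq_nonneg r) ih.1
        linarith
    exact (hY n).1

lemma U2_nonneg_of_le_four (r : ℝ) {n : ℕ} (hn : n ≤ 4) : 0 ≤ U2 n r := by
  interval_cases n <;> norm_num [U2, U1, U]

/-! ### The derivatives of `ξ` -/

lemma sum_Icc_eq_U (n : ℕ) (r : ℝ) :
    ∑ t ∈ Icc 1 n, ((n : ℝ) + 1 - t) * r ^ (t - 1) = U (n + 1) r := by
  induction n with
  | zero => simp [U]
  | succ n ih =>
    have hS : ∑ t ∈ Icc 1 (n + 1), r ^ (t - 1) = S r (n + 1) := by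
      rw [S, range_eq_Ico, sum_Ico_eq_sum_range]
      rw [← Finset.Ico_add_one_right_eq_Icc, sum_Ico_eq_sum_range]
      simp
    rw [U_eq_sum, sum_range_succ, ← U_eq_sum, ← ih, ← hS, sum_Icc_succ_top (by omega),
      sum_Icc_succ_top (by omega), ← add_assoc, ← sum_add_distrib]
    congr 1
    · refine sum_congr rfl fun t _ => ?_
      push_cast; ring
    · push_cast; ring

lemma hasDerivAt_xi {T : ℕ} (hT : 2 ≤ T) (r : ℝ) :
    HasDerivAt (xi T) (U T r / ((T : ℝ) * ((T : ℝ) - 1))) r := by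
  have h : HasDerivAt (xi T) ((1 / ((T : ℝ) * ((T : ℝ) - 1))) *
      ∑ t ∈ Icc 1 (T - 1), (((T : ℝ) - (t : ℝ)) / (t : ℝ)) * ((t : ℝ) * r ^ (t - 1))) r := by
    unfold xi
    refine HasDerivAt.const_mul _ (HasDerivAt.fun_sum fun t _ => ?_)
    exact (hasDerivAt_pow t r).const_mul _
  convert h using 1
  obtain ⟨n, rfl⟩ : ∃ n, T = n + 1 := ⟨T - 1, by omega⟩
  rw [← sum_Icc_eq_U, div_eq_inv_mul, one_div]
  congr 1
  refine sum_congr (by simp) fun t ht => ?_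
  have ht0 : (t : ℝ) ≠ 0 := by
    have := (mem_Icc.1 ht).1
    positivity
  push_cast
  field_simp

/-! ### The trace -/

lemma sum_ite_pow {T : ℕ} {j : ℕ} (hj : j < T) (f : ℕ → ℝ) :
    ∑ i : Fin T, (if j < (i : ℕ) then f ((i : ℕ) - j - 1) else 0)
      = ∑ i ∈ range (T - 1 - j), f i := by
  rw [Fin.sum_univ_eq_sum_range (fun i => if j < i then f (i - j - 1) else 0) T]
  obtain ⟨k, rfl⟩ : ∃ k, T = (j + 1) + k := ⟨T - 1 - j, by omega⟩
  rw [sum_range_add]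
  have h0 : ∑ x ∈ range (j + 1), (if j < x then f (x - j - 1) else 0) = 0 :=
    sum_eq_zero fun x hx => if_neg (by have := mem_range.1 hx; omega)
  rw [h0, zero_add]
  refine sum_congr (by congr 1; omega) fun x _ => ?_
  rw [if_pos (by omega)]
  congr 1; omega

lemma trace_eq (T : ℕ) (r : ℝ) :
    Matrix.trace ((Phi T r)ᵀ * Qmat T * Phi T r)
      = ∑ j ∈ range T, (R r j - S r j ^ 2 / T) := by
  have h1 : Matrix.trace ((Phi T r)ᵀ * Qmat T * Phi T r)
      = ∑ j : Fin T, (R r (T - 1 - j) - S r (T - 1 - j) ^ 2 / T) := by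
    refine sum_congr rfl fun j _ => ?_
    have hS : ∑ i, Phi T r i j = S r (T - 1 - j) := by
      simpa [Phi, S] using sum_ite_pow j.2 (fun i => r ^ i)
    have hR : ∑ i, Phi T r i j ^ 2 = R r (T - 1 - j) := by
      simpa [Phi, R, ite_pow] using sum_ite_pow j.2 (fun i => (r ^ i) ^ 2)
    rw [← hS, ← hR]
    simp only [Matrix.diag_apply, Matrix.mul_apply, Matrix.transpose_apply, Qmat, mul_sub,
      sum_sub_distrib, mul_ite, mul_one, mul_zero, sum_ite_eq', mem_univ, if_true, sub_mul,
      ← sum_mul, ← mul_sum]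
    congr 1
    · exact sum_congr rfl fun i _ => by ring
    · ring
  rw [h1, Fin.sum_univ_eq_sum_range (fun j => R r (T - 1 - j) - S r (T - 1 - j) ^ 2 / T) T]
  exact sum_range_reflect (fun j => R r j - S r j ^ 2 / T) T

lemma S_sq_le (r : ℝ) (k : ℕ) : S r k ^ 2 ≤ k * R r k := by
  simpa [S, R] using sq_sum_le_card_mul_sum_sq (s := range k) (f := fun i => r ^ i)

/-- Strict Cauchy–Schwarz: at least two powers of `r ≠ 1`, hence not all equal. -/
lemma S_sq_lt {r : ℝ} (hr : r ≠ 1) (k : ℕ) :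
    S r (k + 2) ^ 2 < ((k : ℝ) + 2) * R r (k + 2) := by
  induction k with
  | zero =>
    have : 0 < (r - 1) ^ 2 := by
      have := sub_ne_zero.2 hr
      positivity
    simp [S, R, sum_range_succ]
    nlinarith
  | succ k ih =>
    rw [S_succ', R_succ]
    push_cast
    generalize r ^ (k + 2) = y
    have h : 0 < (k : ℝ) + 2 := by positivity
    have h2 : ((k : ℝ) + 2) * (2 * S r (k + 2) * y)
        ≤ ((k : ℝ) + 2) * (R r (k + 2) + ((k : ℝ) + 2) * y ^ 2) := by
      nlinarith [sq_nonneg (S r (k + 2) - ((k : ℝ) + 2) * y)]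
    have h3 := le_of_mul_le_mul_left h2 h
    nlinarith

/-- Cauchy–Schwarz for the concatenation of two lists of powers of `r`, of lengths `a` and `b`. -/
lemma add_sq_le (r : ℝ) (a b : ℕ) :
    (S r a + S r b) ^ 2 ≤ ((a : ℝ) + b) * (R r a + R r b) := by
  have h := sq_sum_le_card_mul_sum_sq (s := (range a).disjSum (range b))
    (f := Sum.elim (fun i => r ^ i) (fun i => r ^ i))
  simpa [S, R, card_disjSum, sum_disjSum] using h

lemma sum_a (T : ℕ) (r : ℝ) :
    ∑ j ∈ range T, (S r j + S r (T - 1 - j)) = 2 * U T r := by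
  rw [sum_add_distrib, sum_range_reflect (S r) T, ← U_eq_sum]; ring

lemma sum_a_sq (T : ℕ) (r : ℝ) :
    ∑ j ∈ range T, (S r j + S r (T - 1 - j)) ^ 2
      = 2 * (∑ j ∈ range T, S r j ^ 2) + 2 * U1 T r := by
  have h : ∀ j, (S r j + S r (T - 1 - j)) ^ 2
      = S r j ^ 2 + S r (T - 1 - j) ^ 2 + 2 * (S r j * S r (T - 1 - j)) := fun j => by ring
  simp only [h, sum_add_distrib, ← mul_sum, ← U1_eq_sum]
  rw [sum_range_reflect (fun j => S r j ^ 2) T]; ring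

/-- With `a j` the column sums of the symmetric Toeplitz matrix `E = Φ + Φᵀ`, whose diagonal
vanishes, Cauchy–Schwarz over the `T - 1` off-diagonal entries gives
`∑ a j ^ 2 ≤ (T - 1) ‖E‖²`, where `‖E‖² = 2 ∑ R r j`. -/
lemma sum_a_sq_le {T : ℕ} (hT : 2 ≤ T) (r : ℝ) :
    ∑ j ∈ range T, (S r j + S r (T - 1 - j)) ^ 2
      ≤ ((T : ℝ) - 1) * (2 * ∑ j ∈ range T, R r j)
    ∧ (3 ≤ T → r ≠ 1 → ∑ j ∈ range T, (S r j + S r (T - 1 - j)) ^ 2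
      < ((T : ℝ) - 1) * (2 * ∑ j ∈ range T, R r j)) := by
  have h2 : 2 * ∑ j ∈ range T, R r j = ∑ j ∈ range T, (R r j + R r (T - 1 - j)) := by
    rw [sum_add_distrib, sum_range_reflect (R r) T]; ring
  rw [h2, mul_sum]
  have hle : ∀ j ∈ range T, (S r j + S r (T - 1 - j)) ^ 2
      ≤ ((T : ℝ) - 1) * (R r j + R r (T - 1 - j)) := by
    intro j hj
    have h := add_sq_le r j (T - 1 - j)
    have hc : ((j : ℝ) + ((T - 1 - j : ℕ) : ℝ)) = (T : ℝ) - 1 := by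
      have := mem_range.1 hj
      rw [← Nat.cast_add, show j + (T - 1 - j) = T - 1 by omega, Nat.cast_sub (by omega)]
      simp
    rwa [hc] at h
  refine ⟨sum_le_sum hle, fun h3 hr => sum_lt_sum hle ⟨0, mem_range.2 (by omega), ?_⟩⟩
  obtain ⟨k, rfl⟩ : ∃ k, T = k + 3 := ⟨T - 3, by omega⟩
  have h := S_sq_lt hr k
  have h0 : R r 0 = 0 := by simp [R]
  rw [S_zero, h0, zero_add, zero_add, show k + 3 - 1 - 0 = k + 2 by omega]
  push_cast
  linarith

/-- With `p = ξ'`, the trace dominates `(T - 1) (p' + 2 p²)`. -/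
lemma le_trace {T : ℕ} (hT : 2 ≤ T) (r : ℝ) :
    U1 T r / T + 2 * U T r ^ 2 / (T ^ 2 * ((T : ℝ) - 1))
      ≤ Matrix.trace ((Phi T r)ᵀ * Qmat T * Phi T r)
    ∧ (3 ≤ T → r ≠ 1 → U1 T r / T + 2 * U T r ^ 2 / (T ^ 2 * ((T : ℝ) - 1))
      < Matrix.trace ((Phi T r)ᵀ * Qmat T * Phi T r)) := by
  rw [trace_eq, sum_sub_distrib, ← sum_div]
  obtain ⟨h1, h2⟩ := sum_a_sq_le hT r
  have h3 := sq_sum_le_card_mul_sum_sq (s := range T) (f := fun j => S r j + S r (T - 1 - j))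
  rw [sum_a, card_range] at h3
  rw [sum_a_sq] at h1 h2 h3
  set A := ∑ j ∈ range T, S r j ^ 2
  set B := ∑ j ∈ range T, R r j
  have hT0 : (2 : ℝ) ≤ T := by exact_mod_cast hT
  have hT1 : (0 : ℝ) < (T : ℝ) - 1 := by linarith
  have hTp : (0 : ℝ) < (T : ℝ) := by linarith
  have key : (B - A / T) - (U1 T r / T + 2 * U T r ^ 2 / (T ^ 2 * ((T : ℝ) - 1)))
      = (((T : ℝ) - 1) * (2 * B) - (2 * A + 2 * U1 T r)) / (2 * ((T : ℝ) - 1))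
        + (T * (2 * A + 2 * U1 T r) - (2 * U T r) ^ 2) / (2 * T ^ 2 * ((T : ℝ) - 1)) := by
    field_simp
    ring
  have k2 : 0 ≤ (T * (2 * A + 2 * U1 T r) - (2 * U T r) ^ 2) / (2 * T ^ 2 * ((T : ℝ) - 1)) :=
    div_nonneg (by linarith) (by positivity)
  constructor
  · have k1 : 0 ≤ (((T : ℝ) - 1) * (2 * B) - (2 * A + 2 * U1 T r)) / (2 * ((T : ℝ) - 1)) :=
      div_nonneg (by linarith) (by positivity)
    linarith
  · intro h3 hr
    have k1 : 0 < (((T : ℝ) - 1) * (2 * B) - (2 * A + 2 * U1 T r)) / (2 * ((T : ℝ) - 1)) :=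
      div_pos (by linarith [h2 h3 hr]) (by positivity)
    linarith

lemma one_le_R {r : ℝ} {k : ℕ} (hk : 1 ≤ k) : 1 ≤ R r k := by
  have h := single_le_sum (f := fun i => (r ^ i) ^ 2) (s := range k)
    (fun i _ => sq_nonneg _) (mem_range.2 (show 0 < k by omega))
  simpa [R] using h

/-! ### A lower bound for `m` -/

/-- Equivalently `m ≥ -1 - 1 / (T - 1)` for `m = ρ - u ξ'(ρ)`. Since `R ρ j ≥ 1` for `j ≥ 1`, the
trace is bounded below and hence `u` above: `u ≤ T / (T - 1)` for `ρ ≤ 0`, where `U T ρ ≤ T - 1`,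
and `u ≤ 2` for `ρ ≥ 0`, where `U T ρ ≤ T (T - 1) / 2`. -/
lemma u_mul_U_le {T : ℕ} (hT : 2 ≤ T) {ρ : ℝ} (hρ : -1 ≤ ρ) (hρ1 : ρ < 1) {u : ℝ} (hu : 0 < u)
    (htr : u * Matrix.trace ((Phi T ρ)ᵀ * Qmat T * Phi T ρ) ≤ (T : ℝ) - 1) :
    u * U T ρ ≤ (T : ℝ) * ((T : ℝ) - 1) * (1 + ρ + 1 / ((T : ℝ) - 1)) := by
  obtain ⟨n, rfl⟩ : ∃ n, T = n + 1 := ⟨T - 1, by omega⟩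
  have hn : (0 : ℝ) < n := by
    have : 0 < n := by omega
    exact_mod_cast this
  rw [trace_eq, sum_range_succ'] at htr
  have hR0 : R ρ 0 = 0 := by simp [R]
  rw [U_eq_sum, sum_range_succ']
  simp only [S_zero, hR0, Nat.cast_add, Nat.cast_one, add_sub_cancel_right, add_zero,
    ne_eq, OfNat.ofNat_ne_zero, not_false_eq_true, zero_pow, zero_div, sub_zero] at htr ⊢
  have hN : ((n : ℝ) + 1) * n * (1 + ρ + 1 / n) = (n + 1) * n * (1 + ρ) + (n + 1) := by
    field_simp
  rw [hN]
  rcases le_or_gt ρ 0 with h0 | h0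
  · have h1 : ∑ k ∈ range n, S ρ (k + 1) ≤ n := by
      simpa using sum_le_card_nsmul (range n) (fun k => S ρ (k + 1)) 1
        (fun k _ => S_le_one hρ h0 _)
    have h2 : (n : ℝ) * (1 - 1 / ((n : ℝ) + 1))
        ≤ ∑ k ∈ range n, (R ρ (k + 1) - S ρ (k + 1) ^ 2 / ((n : ℝ) + 1)) := by
      have := card_nsmul_le_sum (range n)
        (fun k => R ρ (k + 1) - S ρ (k + 1) ^ 2 / ((n : ℝ) + 1)) (1 - 1 / ((n : ℝ) + 1))
        (fun k _ => by
          have a := one_le_R (r := ρ) (show 1 ≤ k + 1 by omega)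
          have b : S ρ (k + 1) ^ 2 ≤ 1 :=
            pow_le_one₀ (S_nonneg hρ _) (S_le_one hρ h0 _)
          have : S ρ (k + 1) ^ 2 / ((n : ℝ) + 1) ≤ 1 / ((n : ℝ) + 1) := by gcongr
          linarith)
      simpa using this
    have h3 : u * ((n : ℝ) * (1 - 1 / ((n : ℝ) + 1))) ≤ n := by
      have := mul_le_mul_of_nonneg_left h2 hu.le
      linarith
    have h4 : u * n ≤ n + 1 := by
      have e : u * ((n : ℝ) * (1 - 1 / ((n : ℝ) + 1))) = (u * n) * n / (n + 1) := by
        field_simp; ring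
      rw [e, div_le_iff₀ (by positivity)] at h3
      nlinarith
    have h5 := mul_le_mul_of_nonneg_left h1 hu.le
    have h6 : 0 ≤ ((n : ℝ) + 1) * n * (1 + ρ) := by
      have : 0 ≤ 1 + ρ := by linarith
      positivity
    linarith
  · have hsum : ∑ k ∈ range n, ((k : ℝ) + 1) = n * (n + 1) / 2 := by
      clear * -
      induction n with
      | zero => simp
      | succ n ih => rw [sum_range_succ, ih]; push_cast; ring
    have h1 : ∑ k ∈ range n, S ρ (k + 1) ≤ n * (n + 1) / 2 := by
      rw [← hsum]
      refine sum_le_sum fun k _ => ?_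
      have := sum_le_card_nsmul (range (k + 1)) (fun i => ρ ^ i) 1
        (fun i _ => pow_le_one₀ h0.le hρ1.le)
      simpa [S] using this
    have h2 : (n : ℝ) / 2
        ≤ ∑ k ∈ range n, (R ρ (k + 1) - S ρ (k + 1) ^ 2 / ((n : ℝ) + 1)) := by
      have e : (n : ℝ) / 2 = ∑ k ∈ range n, (1 - ((k : ℝ) + 1) / ((n : ℝ) + 1)) := by
        rw [sum_sub_distrib, ← sum_div, hsum]
        simp
        field_simp
        ring
      rw [e]
      refine sum_le_sum fun k hk => ?_
      have a := one_le_R (r := ρ) (show 1 ≤ k + 1 by omega)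
      have b := S_sq_le ρ (k + 1)
      have hk' : (k : ℝ) + 1 ≤ n := by exact_mod_cast mem_range.1 hk
      push_cast at b
      have b' : S ρ (k + 1) ^ 2 / ((n : ℝ) + 1)
          ≤ ((k : ℝ) + 1) * R ρ (k + 1) / ((n : ℝ) + 1) := by gcongr
      have d : ((k : ℝ) + 1) / ((n : ℝ) + 1) ≤ 1 := by
        rw [div_le_one (by positivity)]; linarith
      have e2 : ((k : ℝ) + 1) * R ρ (k + 1) / ((n : ℝ) + 1)
          = ((k : ℝ) + 1) / ((n : ℝ) + 1) * R ρ (k + 1) := by ring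
      rw [e2] at b'
      nlinarith
    have h3 : u * ((n : ℝ) / 2) ≤ n := by
      have := mul_le_mul_of_nonneg_left h2 hu.le
      linarith
    have h4 : u ≤ 2 := by nlinarith
    have h5 := mul_le_mul_of_nonneg_left h1 hu.le
    have h6 : 0 ≤ ((n : ℝ) + 1) * n * ρ := by positivity
    have h7 : 0 ≤ (2 - u) * (n * (n + 1) / 2) := mul_nonneg (by linarith) (by positivity)
    nlinarith

/-! ### Sign analysis -/

lemma sign_of_hasDerivAt_neg {f : ℝ → ℝ} {f' x : ℝ} (h : HasDerivAt f f' x) (h0 : f x = 0)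
    (hneg : f' < 0) :
    ∃ ε > 0, ∀ y, |y - x| < ε → (y < x → 0 < f y) ∧ (x < y → f y < 0) := by
  have h1 := (hasDerivAt_iff_tendsto_slope.1 h).eventually (gt_mem_nhds hneg)
  rw [eventually_nhdsWithin_iff, Metric.eventually_nhds_iff] at h1
  obtain ⟨ε, hε, h2⟩ := h1
  refine ⟨ε, hε, fun y hy => ⟨fun hlt => ?_, fun hlt => ?_⟩⟩
  · have := h2 (y := y) (by rwa [Real.dist_eq]) hlt.ne
    rw [slope_def_field, h0, sub_zero] at this
    by_contra! hc
    exact absurd (div_nonneg_of_nonpos hc (sub_nonpos.2 hlt.le)) (not_le.2 this)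
  · have := h2 (y := y) (by rwa [Real.dist_eq]) hlt.ne'
    rw [slope_def_field, h0, sub_zero] at this
    by_contra! hc
    exact absurd (div_nonneg hc (sub_nonneg.2 hlt.le)) (not_le.2 this)

lemma strict_min_of_deriv_sign {f f' : ℝ → ℝ} (h : ∀ r, HasDerivAt f (f' r) r) {x ε : ℝ}
    (hs : ∀ y, |y - x| < ε → (y < x → f' y < 0) ∧ (x < y → 0 < f' y)) :
    ∀ r, r ≠ x → |r - x| < ε → f x < f r := by
  intro r hr hε
  have hc : Continuous f := continuous_iff_continuousAt.2 fun r => (h r).continuousAt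
  rcases lt_or_gt_of_ne hr with hlt | hlt
  · obtain ⟨y, hy, e⟩ := exists_hasDerivAt_eq_slope f f' hlt hc.continuousOn fun y _ => h y
    have h1 := (hs y (lt_of_le_of_lt (by
      rw [abs_of_neg (by linarith [hy.2]), abs_of_neg (by linarith)]; linarith [hy.1]) hε)).1 hy.2
    rw [e, div_lt_iff₀ (by linarith)] at h1
    linarith
  · obtain ⟨y, hy, e⟩ := exists_hasDerivAt_eq_slope f f' hlt hc.continuousOn fun y _ => h y
    have h1 := (hs y (lt_of_le_of_lt (by
      rw [abs_of_pos (by linarith [hy.1]), abs_of_pos (by linarith)]; linarith [hy.2]) hε)).2 hy.1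
    rw [e, lt_div_iff₀ (by linarith)] at h1
    linarith

/-- A function on `[a, ∞)` whose derivative, once nonnegative, stays positive, and which is
eventually positive, has exactly one zero besides a zero at which it decreases: a third zero
would give two zeros of the derivative by Rolle's theorem. -/
lemma exists_second_zero {G G' : ℝ → ℝ} {a ρ : ℝ} (hG : ∀ r, a ≤ r → HasDerivAt G (G' r) r)
    (hmono : ∀ r r', a ≤ r → r < r' → 0 ≤ G' r → 0 < G' r') (haρ : a ≤ ρ) (h0 : G ρ = 0)
    (hneg : G' ρ < 0) (hbig : ∃ K, ∀ r, K ≤ r → 0 < G r) :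
    ∃ ρ₂, ρ < ρ₂ ∧ (∀ r, a ≤ r → (G r = 0 ↔ r = ρ ∨ r = ρ₂)) ∧
      (∀ r, ρ < r → r < ρ₂ → G r < 0) ∧ (∀ r, ρ₂ < r → 0 < G r) := by
  obtain ⟨K, hK⟩ := hbig
  have hcont : ∀ x y, a ≤ x → ContinuousOn G (Set.Icc x y) := fun x y hx r hr =>
    (hG r (hx.trans hr.1)).continuousAt.continuousWithinAt
  have hrolle : ∀ x y, a ≤ x → x < y → G x = 0 → G y = 0 → ∃ z, x < z ∧ z < y ∧ G' z = 0 := by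
    intro x y hx hxy ex ey
    obtain ⟨z, hz, e⟩ := exists_hasDerivAt_eq_zero hxy (hcont x y hx) (ex.trans ey.symm)
      fun z hz => hG z (hx.trans hz.1.le)
    exact ⟨z, hz.1, hz.2, e⟩
  have hleft : ∀ r, a ≤ r → r < ρ → G r ≠ 0 := by
    intro r hr hlt e
    obtain ⟨z, h1, h2, h3⟩ := hrolle r ρ hr hlt e h0
    exact absurd (hmono z ρ (hr.trans h1.le) h2 h3.ge) (not_lt.2 hneg.le)
  have huniq : ∀ x y, ρ < x → x < y → G x = 0 → G y ≠ 0 := by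
    intro x y hx hxy ex ey
    obtain ⟨z, h1, h2, h3⟩ := hrolle ρ x haρ hx h0 ex
    obtain ⟨w, k1, k2, k3⟩ := hrolle x y (haρ.trans hx.le) hxy ex ey
    exact absurd (hmono z w (haρ.trans h1.le) (h2.trans k1) h3.ge) (by rw [k3]; exact lt_irrefl _)
  -- a point just to the right of `ρ` where `G` is negative
  obtain ⟨ε, hε, hs⟩ := sign_of_hasDerivAt_neg (hG ρ haρ) h0 hneg
  have hnear : ∀ b, ρ < b → b < ρ + ε → G b < 0 := fun b h1 h2 =>
    (hs b (by rw [abs_of_pos (by linarith)]; linarith)).2 h1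
  have hzero : ∀ x, ρ < x → G x < 0 → ∃ z, x < z ∧ G z = 0 := by
    intro x hx hx0
    have hlt : x ≤ max (x + 1) K := le_trans (by linarith) (le_max_left _ _)
    obtain ⟨z, hz, e⟩ := intermediate_value_Ioo hlt (hcont x _ (haρ.trans hx.le))
      (show (0 : ℝ) ∈ _ from ⟨hx0, hK _ (le_max_right _ _)⟩)
    exact ⟨z, hz.1, e⟩
  obtain ⟨ρ₂, hρ₂, e₂⟩ := hzero (ρ + ε / 2) (by linarith)
    (hnear _ (by linarith) (by linarith))
  have hlt₂ : ρ < ρ₂ := by linarith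
  refine ⟨ρ₂, hlt₂, fun r hr => ⟨fun e => ?_, ?_⟩, fun r h1 h2 => ?_, fun r h1 => ?_⟩
  · rcases lt_trichotomy r ρ with h | h | h
    · exact absurd e (hleft r hr h)
    · exact Or.inl h
    · rcases lt_trichotomy r ρ₂ with h' | h' | h'
      · exact absurd e₂ (huniq r ρ₂ h h' e)
      · exact Or.inr h'
      · exact absurd e (huniq ρ₂ r hlt₂ h' e₂)
  · rintro (rfl | rfl) <;> assumption
  · by_contra! hc
    set b := min ((ρ + r) / 2) (ρ + ε / 2) with hb
    have hb1 : ρ < b := lt_min (by linarith) (by linarith)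
    have hb2 : b < r := lt_of_le_of_lt (min_le_left _ _) (by linarith)
    have hb3 := hnear b hb1 (lt_of_le_of_lt (min_le_right _ _) (by linarith))
    obtain ⟨z, hz, e⟩ := intermediate_value_Icc hb2.le (hcont b r (haρ.trans hb1.le))
      (show (0 : ℝ) ∈ _ from ⟨hb3.le, hc⟩)
    exact huniq z ρ₂ (hb1.trans_le hz.1) (hz.2.trans_lt h2) e e₂
  · rcases lt_trichotomy (G r) 0 with h | h | h
    · obtain ⟨z, hz, e⟩ := hzero r (hlt₂.trans h1) h
      exact absurd e (huniq ρ₂ z hlt₂ (h1.trans hz) e₂)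
    · exact absurd h (huniq ρ₂ r hlt₂ h1 e₂)
    · exact h

/-- The function `H = (r - m) (p' + 2 p²) - p`, with `p = ξ'`, has the sign of the derivative of
`c + (r - m)² - (r - m) / p`. Once it is nonnegative it stays positive. For `T ≥ 5` the second
derivative of `p` may be negative on `[-1, -1/2)`, but there the lower bound on `m` forces
`H < 0`. -/
lemma H_pos_of_nonneg {T : ℕ} (hT : 2 ≤ T) {m : ℝ} (hm : -1 - 1 / ((T : ℝ) - 1) ≤ m)
    {p p1 p2 : ℝ → ℝ}
    (hp : ∀ r, p r = U T r / ((T : ℝ) * ((T : ℝ) - 1)))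
    (hp1 : ∀ r, p1 r = U1 T r / ((T : ℝ) * ((T : ℝ) - 1)))
    (hp2 : ∀ r, p2 r = U2 T r / ((T : ℝ) * ((T : ℝ) - 1)))
    (hd : ∀ r, HasDerivAt p (p1 r) r) (hd1 : ∀ r, HasDerivAt p1 (p2 r) r)
    (r r' : ℝ) (hr : -1 ≤ r) (hrr' : r < r')
    (h : 0 ≤ (r - m) * (p1 r + 2 * p r ^ 2) - p r) :
    0 < (r' - m) * (p1 r' + 2 * p r' ^ 2) - p r' := by
  have hT0 : (2 : ℝ) ≤ T := by exact_mod_cast hT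
  have hN : 0 < (T : ℝ) * ((T : ℝ) - 1) := mul_pos (by linarith) (by linarith)
  have hppos : ∀ y, -1 ≤ y → 0 < p y := fun y hy => by
    rw [hp]; exact div_pos (by linarith [one_le_U hy hT]) hN
  have hp1n : ∀ y, -1 ≤ y → 0 ≤ p1 y := fun y hy => by
    rw [hp1]; exact div_nonneg (U1_nonneg hy T) hN.le
  have hk : 0 ≤ p1 r + 2 * p r ^ 2 := by nlinarith [hp1n r hr, sq_nonneg (p r)]
  have hx : 0 < r - m := by
    by_contra! hc
    nlinarith [hppos r hr, mul_nonneg (neg_nonneg.2 hc) hk]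
  have hp2n : ∀ y, r ≤ y → 0 ≤ p2 y := by
    intro y hy
    rw [hp2]
    refine div_nonneg ?_ hN.le
    rcases le_or_gt T 4 with h4 | h4
    · exact U2_nonneg_of_le_four y h4
    · refine U2_nonneg (le_trans ?_ hy) T
      by_contra! hlt
      have hT5 : (5 : ℝ) ≤ T := by exact_mod_cast h4
      have h14 : 1 / ((T : ℝ) - 1) ≤ 1 / 4 := by
        apply one_div_le_one_div_of_le <;> linarith
      have hple : p1 r ≤ p r := by
        rw [hp, hp1]
        exact div_le_div_of_nonneg_right (U1_le_U hr (by linarith) hT) hN.le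
      have hpb : p r * (4 * (1 - r)) ≤ 1 := by
        rw [hp, div_mul_eq_mul_div, div_le_one hN]
        have h1 := one_sub_mul_U T r
        have h2 := S_nonneg hr T
        nlinarith
      have hpr := hppos r hr
      -- `x (1 + 2 p) ≥ 1` where `x = r - m`
      have h5 : 1 ≤ (r - m) * (1 + 2 * p r) := by
        have : p r * 1 ≤ p r * ((r - m) * (1 + 2 * p r)) := by nlinarith
        exact le_of_mul_le_mul_left this hpr
      have h6 : 1 ≤ (r + 5 / 4) * (1 + 2 * p r) := by
        refine h5.trans (mul_le_mul_of_nonneg_right (by linarith) (by linarith))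
      nlinarith
  obtain ⟨y, hy, e⟩ := exists_hasDerivAt_eq_slope
    (fun r => (r - m) * (p1 r + 2 * p r ^ 2) - p r)
    (fun r => (1 * (p1 r + 2 * p r ^ 2) + (r - m) * (p2 r + 2 * (2 * p r ^ 1 * p1 r))) - p1 r) hrr'
    (fun y _ => ((((hasDerivAt_id y).sub_const m).mul
      ((hd1 y).add (((hd y).pow 2).const_mul 2))).sub (hd y)).continuousAt.continuousWithinAt)
    (fun y _ => ((((hasDerivAt_id y).sub_const m).mul
      ((hd1 y).add (((hd y).pow 2).const_mul 2))).sub (hd y)).congr_deriv (by simp))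
  have hy1 : -1 ≤ y := hr.trans hy.1.le
  have hpos : 0 < (1 * (p1 y + 2 * p y ^ 2) + (y - m) * (p2 y + 2 * (2 * p y ^ 1 * p1 y)))
      - p1 y := by
    have a1 := hppos y hy1
    have a2 := hp1n y hy1
    have a3 := hp2n y hy.1.le
    have a4 : 0 < y - m := by linarith [hy.1]
    have a5 : 0 ≤ (y - m) * (p2 y + 2 * (2 * p y ^ 1 * p1 y)) := by positivity
    have a6 : 0 < p y ^ 2 := by positivity
    linarith
  rw [e, lt_div_iff₀ (by linarith)] at hpos
  linarith

end PanelAR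

/-- Let `T ≥ 2` be an integer, `ρ ∈ [-1, 1)`, and `u > 0` with
`u·trace(Φ(ρ)ᵀQΦ(ρ)) ≤ T-1` (strictly if `T = 2`).  Set `m = ρ - u·ξ'(ρ)`,
`c = u - u²·ξ'(ρ)²`, and `L(r) = (T-1)·ξ(r) - ((T-1)/2)·log(c + (r-m)²)`.
Then `c > 0`; `L'(ρ) = 0` and `L''(ρ) < 0`; `L` has exactly two stationary
points `ρ₁ < ρ₂` in `[-1, ∞)`, with `ρ₁ = ρ`; `L` attains a strict local
maximum at `ρ` and a strict local minimum at `ρ₂`; and `L` has no other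
local extrema and no stationary point of inflection in `[-1, ∞)`. -/
theorem stmt_15 (T : ℕ) (hT : 2 ≤ T) (ρ : ℝ) (hρ : ρ ∈ Set.Ico (-1 : ℝ) 1)
    (u : ℝ) (hu : 0 < u)
    (htr : u * Matrix.trace ((Phi T ρ)ᵀ * Qmat T * Phi T ρ) ≤ (T : ℝ) - 1)
    (htr2 : T = 2 → u * Matrix.trace ((Phi T ρ)ᵀ * Qmat T * Phi T ρ) < (T : ℝ) - 1)
    (m c : ℝ) (hm : m = ρ - u * deriv (xi T) ρ)
    (hcdef : c = u - u ^ 2 * (deriv (xi T) ρ) ^ 2)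
    (L : ℝ → ℝ)
    (hL : L = fun r : ℝ =>
      ((T : ℝ) - 1) * xi T r - (((T : ℝ) - 1) / 2) * Real.log (c + (r - m) ^ 2)) :
    0 < c
    ∧ deriv L ρ = 0
    ∧ iteratedDeriv 2 L ρ < 0
    ∧ ∃ ρ₂ : ℝ, ρ < ρ₂
        ∧ (∀ r : ℝ, -1 ≤ r → (deriv L r = 0 ↔ r = ρ ∨ r = ρ₂))
        ∧ (∃ ε > (0 : ℝ), ∀ r : ℝ, r ≠ ρ → |r - ρ| < ε → L r < L ρ)
        ∧ (∃ ε > (0 : ℝ), ∀ r : ℝ, r ≠ ρ₂ → |r - ρ₂| < ε → L ρ₂ < L r)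
        ∧ (∀ r : ℝ, -1 ≤ r → r ≠ ρ → r ≠ ρ₂ → ¬ IsLocalMax L r ∧ ¬ IsLocalMin L r)
        ∧ (∀ r : ℝ, -1 ≤ r → deriv L r = 0 → IsLocalMax L r ∨ IsLocalMin L r) := by
  have hT0 : (2 : ℝ) ≤ T := by exact_mod_cast hT
  have hT1 : (0 : ℝ) < (T : ℝ) - 1 := by linarith
  have hN : 0 < (T : ℝ) * ((T : ℝ) - 1) := mul_pos (by linarith) hT1
  obtain ⟨hρ0, hρ1⟩ := hρ
  obtain ⟨p, hp⟩ : ∃ p : ℝ → ℝ, ∀ r, p r = PanelAR.U T r / ((T : ℝ) * ((T : ℝ) - 1)) :=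
    ⟨_, fun _ => rfl⟩
  obtain ⟨p1, hp1⟩ : ∃ p : ℝ → ℝ, ∀ r, p r = PanelAR.U1 T r / ((T : ℝ) * ((T : ℝ) - 1)) :=
    ⟨_, fun _ => rfl⟩
  obtain ⟨p2, hp2⟩ : ∃ p : ℝ → ℝ, ∀ r, p r = PanelAR.U2 T r / ((T : ℝ) * ((T : ℝ) - 1)) :=
    ⟨_, fun _ => rfl⟩
  have hxi : ∀ r, HasDerivAt (xi T) (p r) r := fun r => by
    rw [hp]; exact PanelAR.hasDerivAt_xi hT r
  have hd : ∀ r, HasDerivAt p (p1 r) r := fun r => by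
    rw [funext hp, hp1]; exact (PanelAR.hasDerivAt_U T r).div_const _
  have hd1 : ∀ r, HasDerivAt p1 (p2 r) r := fun r => by
    rw [funext hp1, hp2]; exact (PanelAR.hasDerivAt_U1 T r).div_const _
  have hppos : ∀ y, -1 ≤ y → 0 < p y := fun y hy => by
    rw [hp]; exact div_pos (by linarith [PanelAR.one_le_U hy hT]) hN
  have hp1n : ∀ y, -1 ≤ y → 0 ≤ p1 y := fun y hy => by
    rw [hp1]; exact div_nonneg (PanelAR.U1_nonneg hy T) hN.le
  rw [(hxi ρ).deriv] at hm hcdef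
  have hpρ := hppos ρ hρ0
  -- the trace condition in terms of `p = ξ'`
  have hkey : u * (p1 ρ + 2 * p ρ ^ 2) < 1 := by
    obtain ⟨t1, t2⟩ := PanelAR.le_trace hT ρ
    have e : PanelAR.U1 T ρ / T + 2 * PanelAR.U T ρ ^ 2 / (T ^ 2 * ((T : ℝ) - 1))
        = ((T : ℝ) - 1) * (p1 ρ + 2 * p ρ ^ 2) := by
      rw [hp, hp1]; field_simp
    rw [e] at t1 t2
    have h : u * (((T : ℝ) - 1) * (p1 ρ + 2 * p ρ ^ 2)) < (T : ℝ) - 1 := by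
      rcases hT.eq_or_lt with h2 | h3
      · exact (mul_le_mul_of_nonneg_left t1 hu.le).trans_lt (htr2 h2.symm)
      · exact (mul_lt_mul_of_pos_left (t2 h3 hρ1.ne) hu).trans_le htr
    by_contra! hc
    nlinarith [mul_le_mul_of_nonneg_left hc hT1.le]
  have hc : 0 < c := by
    have h1 : 0 < 1 - u * p ρ ^ 2 := by
      nlinarith [mul_nonneg hu.le (hp1n ρ hρ0), mul_pos hu (pow_pos hpρ 2)]
    have := mul_pos hu h1
    rw [hcdef]; linarith
  have hD : ∀ r, 0 < c + (r - m) ^ 2 := fun r => by positivity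
  have hxρ : ρ - m = u * p ρ := by rw [hm]; ring
  have hDρ : c + (ρ - m) ^ 2 = u := by rw [hxρ, hcdef]; ring
  have hmlow : -1 - 1 / ((T : ℝ) - 1) ≤ m := by
    have h := PanelAR.u_mul_U_le hT hρ0 hρ1 hu htr
    have h1 : u * p ρ ≤ 1 + ρ + 1 / ((T : ℝ) - 1) := by
      rw [hp, mul_div_assoc', div_le_iff₀ hN]; linarith
    linarith
  obtain ⟨L', hL'⟩ : ∃ L' : ℝ → ℝ, ∀ r, L' r
      = ((T : ℝ) - 1) * (p r - (r - m) / (c + (r - m) ^ 2)) := ⟨_, fun _ => rfl⟩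
  have hdD : ∀ r, HasDerivAt (fun r => c + (r - m) ^ 2) (2 * (r - m)) r := fun r => by
    simpa using (((hasDerivAt_id r).sub_const m).pow 2).const_add c
  have hLd : ∀ r, HasDerivAt L (L' r) r := fun r => by
    rw [hL, hL']
    refine (((hxi r).const_mul ((T : ℝ) - 1)).sub
      (((hdD r).log (hD r).ne').const_mul (((T : ℝ) - 1) / 2))).congr_deriv ?_
    ring
  have hderiv : deriv L = L' := funext fun r => (hLd r).deriv
  have hL'ρ : L' ρ = 0 := by
    rw [hL', hDρ, hxρ, mul_div_cancel_left₀ _ hu.ne', sub_self, mul_zero]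
  have hL'' : HasDerivAt L' (((T : ℝ) - 1) * (p1 ρ - 1 / u + 2 * p ρ ^ 2)) ρ := by
    rw [funext hL']
    refine (((hd ρ).sub ((((hasDerivAt_id ρ).sub_const m)).div (hdD ρ)
      (hD ρ).ne')).const_mul ((T : ℝ) - 1)).congr_deriv ?_
    simp only [id]
    rw [hDρ, hxρ]
    field_simp
    ring
  have hneg : ((T : ℝ) - 1) * (p1 ρ - 1 / u + 2 * p ρ ^ 2) < 0 := by
    refine mul_neg_of_pos_of_neg hT1 ?_
    have : p1 ρ + 2 * p ρ ^ 2 < 1 / u := by rw [lt_div_iff₀ hu]; linarith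
    linarith
  -- `L'` has the sign of `G = c + (r - m)² - (r - m) / p` on `[-1, ∞)`
  obtain ⟨G, hG⟩ : ∃ G : ℝ → ℝ, ∀ r, G r = c + (r - m) ^ 2 - (r - m) / p r :=
    ⟨_, fun _ => rfl⟩
  have hLG : ∀ r, -1 ≤ r → L' r = ((T : ℝ) - 1) * (p r / (c + (r - m) ^ 2)) * G r := by
    intro r hr
    have := (hppos r hr).ne'
    have := (hD r).ne'
    rw [hL', hG]
    field_simp
  have hfac : ∀ r, -1 ≤ r → 0 < ((T : ℝ) - 1) * (p r / (c + (r - m) ^ 2)) := fun r hr =>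
    mul_pos hT1 (div_pos (hppos r hr) (hD r))
  have hGd : ∀ r, -1 ≤ r →
      HasDerivAt G (((r - m) * (p1 r + 2 * p r ^ 2) - p r) / p r ^ 2) r := by
    intro r hr
    have hpr := (hppos r hr).ne'
    rw [funext hG]
    refine ((hdD r).sub (((hasDerivAt_id r).sub_const m).div (hd r) hpr)).congr_deriv ?_
    simp only [id]
    field_simp
    ring
  obtain ⟨ρ₂, hlt, hz, hGneg, hGpos⟩ := PanelAR.exists_second_zero
    (G := G) (G' := fun r => ((r - m) * (p1 r + 2 * p r ^ 2) - p r) / p r ^ 2)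
    (a := -1) (ρ := ρ) hGd
    (by
      intro r r' hr hrr' h
      have h1 : 0 < p r ^ 2 := pow_pos (hppos r hr) 2
      have h2 : 0 < p r' ^ 2 := pow_pos (hppos r' (hr.trans hrr'.le)) 2
      refine div_pos ?_ h2
      refine PanelAR.H_pos_of_nonneg hT hmlow hp hp1 hp2 hd hd1 r r' hr hrr' ?_
      have := mul_nonneg h h1.le
      rwa [div_mul_cancel₀ _ h1.ne'] at this)
    hρ0
    (by
      rw [hG, hDρ, hxρ, mul_div_cancel_right₀ _ hpρ.ne', sub_self])
    (by
      refine div_neg_of_neg_of_pos ?_ (pow_pos hpρ 2)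
      rw [hxρ]
      nlinarith)
    (by
      -- for `r ≥ 0` one has `p r ≥ p 0 = 1 / T`, so `G r > 0` as soon as `r - m ≥ T`
      refine ⟨max 0 (m + T), fun r hr => ?_⟩
      have hr0 : 0 ≤ r := (le_max_left _ _).trans hr
      have hrm : m + T ≤ r := (le_max_right _ _).trans hr
      have hU : (T : ℝ) - 1 ≤ PanelAR.U T r := by
        obtain ⟨n, rfl⟩ : ∃ n, T = n + 1 := ⟨T - 1, by omega⟩
        rw [PanelAR.U]
        push_cast
        have := mul_nonneg hr0 (PanelAR.U_nonneg (by linarith : -1 ≤ r) n)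
        linarith
      have hpr := hppos r (by linarith)
      have h1 : 1 ≤ T * p r := by
        rw [hp, mul_div_assoc', le_div_iff₀ hN, one_mul]
        exact mul_le_mul_of_nonneg_left hU (by linarith)
      have h2 : (r - m) / p r ≤ (r - m) ^ 2 := by
        rw [div_le_iff₀ hpr]
        have : 1 ≤ (r - m) * p r := h1.trans (mul_le_mul_of_nonneg_right (by linarith) hpr.le)
        nlinarith
      rw [hG]
      linarith)
  have hρ₂ : -1 < ρ₂ := hρ0.trans_lt hlt
  have hstat : ∀ r, -1 ≤ r → (deriv L r = 0 ↔ r = ρ ∨ r = ρ₂) := by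
    intro r hr
    rw [hderiv, hLG r hr, mul_eq_zero, or_iff_right (hfac r hr).ne', hz r hr]
  have hmax : ∃ ε > (0 : ℝ), ∀ r : ℝ, r ≠ ρ → |r - ρ| < ε → L r < L ρ := by
    obtain ⟨ε, hε, hs⟩ := PanelAR.sign_of_hasDerivAt_neg hL'' hL'ρ hneg
    refine ⟨ε, hε, fun r hr hrε => ?_⟩
    have := PanelAR.strict_min_of_deriv_sign (f := fun r => -L r) (f' := fun r => -L' r)
      (fun r => (hLd r).neg) (x := ρ) (ε := ε)
      (fun y hy => ⟨fun h => neg_neg_of_pos ((hs y hy).1 h),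
        fun h => neg_pos.2 ((hs y hy).2 h)⟩) r hr hrε
    exact neg_lt_neg_iff.1 this
  have hmin : ∃ ε > (0 : ℝ), ∀ r : ℝ, r ≠ ρ₂ → |r - ρ₂| < ε → L ρ₂ < L r := by
    refine ⟨ρ₂ - ρ, by linarith, ?_⟩
    refine PanelAR.strict_min_of_deriv_sign hLd fun y hy => ?_
    have hy1 : ρ < y := by linarith [(abs_lt.1 hy).1]
    rw [hLG y (by linarith)]
    have hf := hfac y (by linarith)
    exact ⟨fun h => mul_neg_of_pos_of_neg hf (hGneg y hy1 h), fun h => mul_pos hf (hGpos y h)⟩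
  refine ⟨hc, by rw [hderiv, hL'ρ], ?_, ρ₂, hlt, hstat, hmax, hmin, ?_, ?_⟩
  · rw [iteratedDeriv_succ, iteratedDeriv_one, hderiv, hL''.deriv]
    exact hneg
  · intro r hr h1 h2
    have h : deriv L r ≠ 0 := fun e => by
      rcases (hstat r hr).1 e with h | h
      · exact h1 h
      · exact h2 h
    exact ⟨fun hl => h hl.deriv_eq_zero, fun hl => h hl.deriv_eq_zero⟩
  · intro r hr e
    rcases (hstat r hr).1 e with rfl | rfl
    · obtain ⟨ε, hε, hs⟩ := hmax
      refine Or.inl (Metric.eventually_nhds_iff.2 ⟨ε, hε, fun y hy => ?_⟩)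
      rcases eq_or_ne y r with rfl | hne
      · exact le_rfl
      · exact (hs y hne (by rwa [Real.dist_eq] at hy)).le
    · obtain ⟨ε, hε, hs⟩ := hmin
      refine Or.inr (Metric.eventually_nhds_iff.2 ⟨ε, hε, fun y hy => ?_⟩)
      rcases eq_or_ne y r with rfl | hne
      · exact le_rfl
      · exact (hs y hne (by rwa [Real.dist_eq] at hy)).le
end

section
/- Let T ≥ 2 be an integer, set m = (T-2)/(T+1) and c = 3(2T-1)/(T+1)², and define L(r) = (T-1)·ξ(r) - ((T-1)/2)·log(c + (r-m)²) for r ∈ ℝ. Then L'(1) = 0, L''(1) = 0, and L'''(1) = T(T-1)(T+1)/12 > 0. -/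
/-!
Write `q(r) = c + (r - m)²`. At `r = 1` one has `1 - m = 3/(T+1)` and `q(1) = 6/(T+1)`, so the first
three derivatives of `log q` at `1` are `1`, `2(T+1)/6 - 1 = (T-2)/3` and `1 - T`. The derivatives of
`ξ` at `1` are sums over `t` of polynomials in `t`, namely `1/2`, `(T-2)/6` and `(T-2)(T-3)/12`, by
`sum_sub`, `sum_sub_mul` and `sum_sub_mul_mul`. Combining the two parts gives `0`, `0` and
`(T-1)((T-2)(T-3) + 6(T-1))/12 = T(T-1)(T+1)/12`.
-/

open Finset

/-- The constant `K` is kept independent of `n`, so that induction on `n` applies; it is later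
set to `n`. -/
lemma sum_sub (K : ℝ) (n : ℕ) :
    ∑ i ∈ Finset.range n, (K - i) = n * K - n * (n - 1) / 2 := by
  induction n with
  | zero => simp
  | succ n ih => rw [Finset.sum_range_succ, ih]; push_cast; ring

lemma sum_sub_mul (K : ℝ) (n : ℕ) :
    ∑ i ∈ Finset.range n, (K - i) * (i : ℝ) =
      K * (n * (n - 1) / 2) - n * (n - 1) * (2 * n - 1) / 6 := by
  induction n with
  | zero => simp
  | succ n ih => rw [Finset.sum_range_succ, ih]; push_cast; ring

lemma sum_sub_mul_mul (K : ℝ) (n : ℕ) :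
    ∑ i ∈ Finset.range n, (K - i) * ((i : ℝ) * (i - 1)) =
      K * (n * (n - 1) * (n - 2) / 3)
        - (n * (n - 1) * (n - 2) * (n - 3) / 4 + 2 * (n * (n - 1) * (n - 2)) / 3) := by
  induction n with
  | zero => simp
  | succ n ih => rw [Finset.sum_range_succ, ih]; push_cast; ring

/-- Termwise differentiation of a polynomial with arbitrary exponents; the truncated exponent
`e i - 1` is harmless because its coefficient vanishes when `e i = 0`. -/
lemma hasDerivAt_sum_pow (n : ℕ) (a : ℕ → ℝ) (e : ℕ → ℕ) (r : ℝ) :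
    HasDerivAt (fun r : ℝ => ∑ i ∈ Finset.range n, a i * r ^ e i)
      (∑ i ∈ Finset.range n, (a i * e i) * r ^ (e i - 1)) r := by
  refine HasDerivAt.fun_sum fun i _ => ?_
  simpa [mul_assoc] using (hasDerivAt_pow (e i) r).const_mul (a i)

/-- If `f₁, f₂, f₃` are successive derivatives of `f₀`, they compute its iterated derivatives. -/
lemma iteratedDeriv_of_chain {f₀ f₁ f₂ f₃ : ℝ → ℝ} (h₁ : ∀ r, HasDerivAt f₀ (f₁ r) r)
    (h₂ : ∀ r, HasDerivAt f₁ (f₂ r) r) (h₃ : ∀ r, HasDerivAt f₂ (f₃ r) r) :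
    deriv f₀ = f₁ ∧ iteratedDeriv 2 f₀ = f₂ ∧ iteratedDeriv 3 f₀ = f₃ := by
  have e₁ : deriv f₀ = f₁ := funext fun r => (h₁ r).deriv
  have e₂ : iteratedDeriv 2 f₀ = f₂ := by
    rw [iteratedDeriv_succ, iteratedDeriv_one, e₁]
    exact funext fun r => (h₂ r).deriv
  refine ⟨e₁, e₂, ?_⟩
  rw [iteratedDeriv_succ, e₂]
  exact funext fun r => (h₃ r).deriv

lemma hasDerivAt_log_quad (c m : ℝ) (hc : 0 < c) (r : ℝ) :
    HasDerivAt (fun r => Real.log (c + (r - m) ^ 2)) (2 * (r - m) / (c + (r - m) ^ 2)) r := by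
  have hq : c + (r - m) ^ 2 ≠ 0 := by positivity
  have hd := ((((hasDerivAt_id' r).sub_const m).fun_pow 2).const_add c).log hq
  convert hd using 1
  simp

lemma hasDerivAt_log_quad₂ (c m : ℝ) (hc : 0 < c) (r : ℝ) :
    HasDerivAt (fun r => 2 * (r - m) / (c + (r - m) ^ 2))
      (2 / (c + (r - m) ^ 2) - 4 * (r - m) ^ 2 / (c + (r - m) ^ 2) ^ 2) r := by
  have hq : c + (r - m) ^ 2 ≠ 0 := by positivity
  have hx := (hasDerivAt_id' r).sub_const m
  have hd := (hx.const_mul 2).fun_div ((hx.fun_pow 2).const_add c) hq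
  refine hd.congr_deriv ?_
  field_simp
  push_cast
  ring

lemma hasDerivAt_log_quad₃ (c m : ℝ) (hc : 0 < c) (r : ℝ) :
    HasDerivAt (fun r => 2 / (c + (r - m) ^ 2) - 4 * (r - m) ^ 2 / (c + (r - m) ^ 2) ^ 2)
      (-12 * (r - m) / (c + (r - m) ^ 2) ^ 2 + 16 * (r - m) ^ 3 / (c + (r - m) ^ 2) ^ 3) r := by
  have hq : c + (r - m) ^ 2 ≠ 0 := by positivity
  have hx := (hasDerivAt_id' r).sub_const m
  have hQ := (hx.fun_pow 2).const_add c
  have hd := ((hasDerivAt_const r (2 : ℝ)).fun_div hQ hq).fun_sub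
    (((hx.fun_pow 2).const_mul 4).fun_div (hQ.fun_pow 2) (pow_ne_zero 2 hq))
  refine hd.congr_deriv ?_
  field_simp
  push_cast
  ring

/-- `ξ` for `T = n + 1`, summed over `i = t - 1`. -/
lemma xi_succ (n : ℕ) (r : ℝ) :
    xi (n + 1) r = (1 / (((n : ℝ) + 1) * n)) *
      ∑ i ∈ Finset.range n, (((n : ℝ) - i) / (i + 1)) * r ^ (i + 1) := by
  unfold xi
  have h : Finset.Icc 1 (n + 1 - 1) = Finset.Ico 1 (n + 1) := by
    ext; simp
  rw [h, Finset.sum_Ico_eq_sum_range, Nat.add_sub_cancel]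
  push_cast
  rw [add_sub_cancel_right]
  congr 1
  refine Finset.sum_congr rfl fun i _ => ?_
  rw [add_comm 1 i, add_comm 1 (i : ℝ), add_sub_add_right_eq_sub]

/-- Let `T ≥ 2` be an integer, set `m = (T-2)/(T+1)` and `c = 3(2T-1)/(T+1)²`,
and define `L(r) = (T-1)·ξ(r) - ((T-1)/2)·log(c + (r-m)²)`.  Then `L'(1) = 0`,
`L''(1) = 0`, and `L'''(1) = T(T-1)(T+1)/12 > 0`. -/
theorem stmt_16 (T : ℕ) (hT : 2 ≤ T) (m c : ℝ)
    (hm : m = ((T : ℝ) - 2) / ((T : ℝ) + 1))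
    (hc : c = 3 * (2 * (T : ℝ) - 1) / ((T : ℝ) + 1) ^ 2)
    (L : ℝ → ℝ)
    (hL : L = fun r : ℝ =>
      ((T : ℝ) - 1) * xi T r - (((T : ℝ) - 1) / 2) * Real.log (c + (r - m) ^ 2)) :
    deriv L 1 = 0
    ∧ iteratedDeriv 2 L 1 = 0
    ∧ iteratedDeriv 3 L 1 = (T : ℝ) * ((T : ℝ) - 1) * ((T : ℝ) + 1) / 12
    ∧ 0 < iteratedDeriv 3 L 1 := by
  obtain ⟨n, rfl⟩ : ∃ n, T = n + 1 := ⟨T - 1, by omega⟩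
  have hn : (1 : ℝ) ≤ n := by exact_mod_cast (by omega : 1 ≤ n)
  have hn0 : (n : ℝ) ≠ 0 := by positivity
  push_cast at hm hc hL ⊢
  have hcpos : 0 < c := by
    rw [hc]
    have : 0 < 2 * ((n : ℝ) + 1) - 1 := by linarith
    positivity
  have hx : 1 - m = 3 / ((n : ℝ) + 2) := by
    rw [hm]; field_simp; ring
  have hq : c + (1 - m) ^ 2 = 6 / ((n : ℝ) + 2) := by
    rw [hx, hc]; field_simp; ring
  simp only [xi_succ] at hL
  -- Successive derivatives of the sum in `ξ`, with coefficients and exponents left unreduced so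
  -- that each one matches the next.
  have s₁ := hasDerivAt_sum_pow n (fun i => ((n : ℝ) - i) / (i + 1)) (fun i => i + 1)
  have s₂ := hasDerivAt_sum_pow n (fun i => ((n : ℝ) - i) / (i + 1) * (i + 1 : ℕ))
    (fun i => i + 1 - 1)
  have s₃ := hasDerivAt_sum_pow n
    (fun i => ((n : ℝ) - i) / (i + 1) * (i + 1 : ℕ) * (i + 1 - 1 : ℕ)) (fun i => i + 1 - 1 - 1)
  obtain ⟨e₁, e₂, e₃⟩ := iteratedDeriv_of_chain (f₀ := L)
    (fun r => hL ▸ (((s₁ r).const_mul _).const_mul _).fun_sub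
      ((hasDerivAt_log_quad c m hcpos r).const_mul _))
    (fun r => (((s₂ r).const_mul _).const_mul _).fun_sub
      ((hasDerivAt_log_quad₂ c m hcpos r).const_mul _))
    (fun r => (((s₃ r).const_mul _).const_mul _).fun_sub
      ((hasDerivAt_log_quad₃ c m hcpos r).const_mul _))
  have t₁ : ∑ i ∈ Finset.range n, (((n : ℝ) - i) / (i + 1) * (i + 1 : ℕ)) * 1 ^ (i + 1 - 1)
      = n * n - n * (n - 1) / 2 := by
    rw [← sum_sub]
    refine Finset.sum_congr rfl fun i _ => ?_
    push_cast; rw [one_pow]; field_simp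
  have t₂ : ∑ i ∈ Finset.range n,
      (((n : ℝ) - i) / (i + 1) * (i + 1 : ℕ) * (i + 1 - 1 : ℕ)) * 1 ^ (i + 1 - 1 - 1)
      = n * (n * (n - 1) / 2) - n * (n - 1) * (2 * n - 1) / 6 := by
    rw [← sum_sub_mul]
    refine Finset.sum_congr rfl fun i _ => ?_
    rw [Nat.add_sub_cancel]; push_cast; rw [one_pow]; field_simp
  have t₃ : ∑ i ∈ Finset.range n,
      (((n : ℝ) - i) / (i + 1) * (i + 1 : ℕ) * (i + 1 - 1 : ℕ) * (i + 1 - 1 - 1 : ℕ))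
        * 1 ^ (i + 1 - 1 - 1 - 1)
      = n * (n * (n - 1) * (n - 2) / 3)
        - (n * (n - 1) * (n - 2) * (n - 3) / 4 + 2 * (n * (n - 1) * (n - 2)) / 3) := by
    rw [← sum_sub_mul_mul]
    refine Finset.sum_congr rfl fun i _ => ?_
    -- At `i = 0` the truncated `i - 1` differs from the real one, but the factor `i` vanishes.
    rcases i with _ | i
    · simp
    · simp only [Nat.add_sub_cancel, one_pow]
      push_cast
      field_simp
      ring
  have v₃ : iteratedDeriv 3 L 1 = ((n : ℝ) + 1) * (n + 1 - 1) * (n + 1 + 1) / 12 := by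
    rw [e₃]
    beta_reduce
    rw [hq, hx, t₃]
    field_simp
    ring
  refine ⟨?_, ?_, v₃, ?_⟩
  · rw [e₁]
    beta_reduce
    rw [hq, hx, t₁]
    field_simp
    ring
  · rw [e₂]
    beta_reduce
    rw [hq, hx, t₂]
    field_simp
    ring
  · rw [v₃]
    have : (0 : ℝ) < n + 1 - 1 := by linarith
    positivity
end

section
/- Let T ≥ 2 be an integer, set m = (T-2)/(T+1) and c = 3(2T-1)/(T+1)², and define L(r) = (T-1)·ξ(r) - ((T-1)/2)·log(c + (r-m)²) for r ∈ [-1, ∞). Then L'(r) > 0 for every r ∈ [-1, ∞) with r ≠ 1 and L'(1) = 0; hence r = 1 is the unique stationary point of L in [-1, ∞), L is strictly increasing on [-1, ∞), L has no local maximum and no local minimum in [-1, ∞), and L has a stationary point of inflection at r = 1. -/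
/-!
Write `a = T`, `n = T - 1`, `S(r) = Σ_{t=1}^{n} (a - t) r^{t-1}` and `Q(r) = c + (r - m)²`. Since
`m² + c = 1`, one has `(T+1) Q(r) = (T+1)(r-1)² + 6r`, and
`L'(r) = (T-1) (S(r) Q(r) - T(T-1)(r-m)) / (T(T-1) Q(r))`, so the sign of `L'` is that of
`F(r) = S(r) ((T+1)(r-1)² + 6r) - T(T-1)((T+1)r - (T-2))`.

The telescoping identity `(1-r)² S(r) = r^T - (1 + T(r-1))` (`weighted_geom_sum`) turns this into
`F(r) = (T+1)(r^T - (1 + T(r-1))) + 6 Σ (T-t) r^t - T(T-1)((T+1)r - (T-2))`.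
The last, linear, term is exactly what is obtained from `6 Σ (T-t) r^t` on replacing each `r^t` by
its tangent `1 + t(r-1)` at `1` (`tangent_sum`). Bernoulli's inequality `r^t ≥ 1 + t(r-1)` is valid
for all `r ≥ -1`, hence `F(r) ≥ (T+1)(r^T - (1 + T(r-1)))`, which is positive for `r ≠ 1`
(`tangent_lt_pow`), while `F(1) = 0`. Strict monotonicity of `L` follows on `[-1, 1]` and
`[1, ∞)` separately, and rules out a local extremum at `1`.
-/

open Finset

/-- Telescoped form of the weighted geometric sum; at `a = n + 1` the `r ^ n` term drops out. -/
lemma weighted_geom_sum (a r : ℝ) (n : ℕ) :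
    (1 - r) ^ 2 * ∑ t ∈ Finset.Icc 1 n, (a - (t : ℝ)) * r ^ (t - 1)
      = (a - 1) - a * r - (a - n - 1) * r ^ n + (a - n) * r ^ (n + 1) := by
  induction n with
  | zero => simp
  | succ k ih =>
    rw [Finset.sum_Icc_succ_top (by omega), mul_add, ih]
    simp only [Nat.add_sub_cancel]
    push_cast
    ring

lemma tangent_sum (a s : ℝ) (n : ℕ) :
    ∑ t ∈ Finset.Icc 1 n, (a - (t : ℝ)) * (1 + t * s)
      = a * n - n * (n + 1) / 2 + s * (a * (n * (n + 1) / 2) - n * (n + 1) * (2 * n + 1) / 6) := by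
  induction n with
  | zero => simp
  | succ k ih =>
    rw [Finset.sum_Icc_succ_top (by omega), ih]
    push_cast
    ring

lemma tangent_le_pow {r : ℝ} (hr : -1 ≤ r) (n : ℕ) : 1 + (n : ℝ) * (r - 1) ≤ r ^ n := by
  have h := one_add_mul_le_pow (a := r - 1) (by linarith) n
  rwa [add_sub_cancel] at h

/-- Strict Bernoulli inequality on the extended range `r ≥ -1`. -/
lemma tangent_lt_pow {r : ℝ} (hr : -1 ≤ r) (hr1 : r ≠ 1) {n : ℕ} (hn : 2 ≤ n) :
    1 + (n : ℝ) * (r - 1) < r ^ n := by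
  obtain ⟨k, rfl⟩ : ∃ k, n = k + 1 := ⟨n - 1, by omega⟩
  have hk : (1 : ℝ) ≤ k := by exact_mod_cast (by omega : 1 ≤ k)
  rcases le_or_gt 0 r with h0 | h0
  · have h := mul_le_mul_of_nonneg_right (tangent_le_pow hr k) h0
    have hsq : 0 < (r - 1) ^ 2 := by
      have := sub_ne_zero.mpr hr1
      positivity
    rw [pow_succ]
    push_cast
    nlinarith
  · -- here `|r| ≤ 1`, so `r ^ n ≥ -1`, and the tangent line is already below `-1`
    have h1 : |r ^ (k + 1)| ≤ 1 := by
      rw [abs_pow]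
      exact pow_le_one₀ (abs_nonneg r) (abs_le.mpr ⟨hr, by linarith⟩)
    have h2 := (abs_le.mp h1).1
    push_cast
    nlinarith

/-- The sum occurring in `ξ'`. -/
noncomputable def xiSum (T : ℕ) (r : ℝ) : ℝ :=
  ∑ t ∈ Finset.Icc 1 (T - 1), ((T : ℝ) - (t : ℝ)) * r ^ (t - 1)

lemma hasDerivAt_xi (T : ℕ) (r : ℝ) :
    HasDerivAt (xi T) ((1 / ((T : ℝ) * ((T : ℝ) - 1))) * xiSum T r) r := by
  unfold xi xiSum
  refine HasDerivAt.const_mul _ (HasDerivAt.fun_sum fun t ht => ?_)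
  have ht0 : (t : ℝ) ≠ 0 := by
    have := (Finset.mem_Icc.mp ht).1
    exact_mod_cast (by omega : t ≠ 0)
  refine ((hasDerivAt_pow t r).const_mul _).congr_deriv ?_
  field_simp

/-- `L'` has the sign of its numerator `F`, which is bounded below on `[-1, ∞)` by the gap in
Bernoulli's inequality for the exponent `T`. -/
lemma numerator_ge {T : ℕ} (hT : 2 ≤ T) {r : ℝ} (hr : -1 ≤ r) :
    ((T : ℝ) + 1) * (r ^ T - (1 + T * (r - 1)))
      ≤ xiSum T r * (((T : ℝ) + 1) * (r - 1) ^ 2 + 6 * r)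
        - T * ((T : ℝ) - 1) * (((T : ℝ) + 1) * r - (T - 2)) := by
  obtain ⟨n, rfl⟩ : ∃ n, T = n + 1 := ⟨T - 1, by omega⟩
  have h1 := weighted_geom_sum ((n + 1 : ℕ) : ℝ) r n
  have h2 := tangent_sum ((n + 1 : ℕ) : ℝ) (r - 1) n
  have h3 : ∑ t ∈ Finset.Icc 1 n, (((n + 1 : ℕ) : ℝ) - (t : ℝ)) * (1 + t * (r - 1))
      ≤ r * ∑ t ∈ Finset.Icc 1 n, (((n + 1 : ℕ) : ℝ) - (t : ℝ)) * r ^ (t - 1) := by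
    rw [Finset.mul_sum]
    refine Finset.sum_le_sum fun t ht => ?_
    obtain ⟨ht1, htn⟩ := Finset.mem_Icc.mp ht
    have hpos : (0 : ℝ) ≤ ((n + 1 : ℕ) : ℝ) - t :=
      sub_nonneg.mpr (by exact_mod_cast (by omega : t ≤ n + 1))
    have hpow : r * r ^ (t - 1) = r ^ t := mul_pow_sub_one (by omega) r
    calc _ ≤ (((n + 1 : ℕ) : ℝ) - t) * r ^ t :=
          mul_le_mul_of_nonneg_left (tangent_le_pow hr t) hpos
      _ = _ := by rw [← hpow]; ring
  unfold xiSum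
  simp only [Nat.add_sub_cancel]
  rw [h2] at h3
  generalize ∑ t ∈ Finset.Icc 1 n, (((n + 1 : ℕ) : ℝ) - (t : ℝ)) * r ^ (t - 1) = S at *
  push_cast at *
  linear_combination 6 * h3 - ((n : ℝ) + 2) * h1

lemma xiSum_one {T : ℕ} (hT : 2 ≤ T) : xiSum T 1 = T * ((T : ℝ) - 1) / 2 := by
  obtain ⟨n, rfl⟩ : ∃ n, T = n + 1 := ⟨T - 1, by omega⟩
  have h := tangent_sum ((n + 1 : ℕ) : ℝ) 0 n
  simp only [mul_zero, add_zero, mul_one, zero_mul] at h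
  unfold xiSum
  simp only [Nat.add_sub_cancel, one_pow, mul_one]
  rw [h]
  push_cast
  ring

/-- Let `T ≥ 2` be an integer, set `m = (T-2)/(T+1)` and `c = 3(2T-1)/(T+1)²`,
and define `L(r) = (T-1)·ξ(r) - ((T-1)/2)·log(c + (r-m)²)` for `r ∈ [-1, ∞)`.
Then `L'(r) > 0` for every `r ∈ [-1, ∞)` with `r ≠ 1` and `L'(1) = 0`; hence
`r = 1` is the unique stationary point of `L` in `[-1, ∞)`, `L` is strictly
increasing on `[-1, ∞)`, `L` has no local maximum and no local minimum in
`[-1, ∞)`, and `L` has a stationary point of inflection at `r = 1`. -/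
theorem stmt_17 (T : ℕ) (hT : 2 ≤ T) (m c : ℝ)
    (hm : m = ((T : ℝ) - 2) / ((T : ℝ) + 1))
    (hc : c = 3 * (2 * (T : ℝ) - 1) / ((T : ℝ) + 1) ^ 2)
    (L : ℝ → ℝ)
    (hL : L = fun r : ℝ =>
      ((T : ℝ) - 1) * xi T r - (((T : ℝ) - 1) / 2) * Real.log (c + (r - m) ^ 2)) :
    (∀ r : ℝ, -1 ≤ r → r ≠ 1 → 0 < deriv L r)
    ∧ deriv L 1 = 0
    ∧ (∀ r : ℝ, -1 ≤ r → deriv L r = 0 → r = 1)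
    ∧ StrictMonoOn L (Set.Ici (-1 : ℝ))
    ∧ (∀ r : ℝ, -1 ≤ r → ¬ IsLocalMax L r ∧ ¬ IsLocalMin L r)
    ∧ (deriv L 1 = 0 ∧ ¬ IsLocalMax L 1 ∧ ¬ IsLocalMin L 1) := by
  have hT2 : (2 : ℝ) ≤ T := by exact_mod_cast hT
  have hT0 : (T : ℝ) ≠ 0 := by linarith
  have hT1 : (T : ℝ) - 1 ≠ 0 := by linarith
  have hTp : (T : ℝ) + 1 ≠ 0 := by linarith
  have hcpos : 0 < c := by
    rw [hc]
    have : 0 < 2 * (T : ℝ) - 1 := by linarith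
    positivity
  have hQpos : ∀ r : ℝ, 0 < c + (r - m) ^ 2 := fun r => by positivity
  -- this is `m² + c = 1` in disguise
  have hQ : ∀ r : ℝ, ((T : ℝ) + 1) * (c + (r - m) ^ 2) = ((T : ℝ) + 1) * (r - 1) ^ 2 + 6 * r := by
    intro r
    rw [hc, hm]
    field_simp
    ring
  have hmT : ((T : ℝ) + 1) * m = T - 2 := by
    rw [hm]
    field_simp
  have hd : ∀ r : ℝ, HasDerivAt L
      ((xiSum T r * (((T : ℝ) + 1) * (r - 1) ^ 2 + 6 * r)
        - T * ((T : ℝ) - 1) * (((T : ℝ) + 1) * r - (T - 2)))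
        / (T * (((T : ℝ) + 1) * (c + (r - m) ^ 2)))) r := by
    intro r
    have hq : HasDerivAt (fun r : ℝ => c + (r - m) ^ 2) (2 * (r - m)) r := by
      refine ((((hasDerivAt_id' r).sub_const m).pow 2).const_add c).congr_deriv ?_
      norm_num
    have h := ((hasDerivAt_xi T r).const_mul ((T : ℝ) - 1)).sub
      ((hq.log (hQpos r).ne').const_mul (((T : ℝ) - 1) / 2))
    rw [hL]
    refine h.congr_deriv ?_
    rw [← hQ, ← hmT]
    have := (hQpos r).ne'
    field_simp
  have hpos : ∀ r : ℝ, -1 ≤ r → r ≠ 1 → 0 < deriv L r := by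
    intro r hr hr1
    rw [(hd r).deriv]
    have hF := numerator_ge hT hr
    have hB := sub_pos.mpr (tangent_lt_pow hr hr1 hT)
    have hTT : (0 : ℝ) < (T : ℝ) + 1 := by linarith
    have hT00 : (0 : ℝ) < T := by linarith
    exact div_pos ((mul_pos hTT hB).trans_le hF)
      (mul_pos hT00 (mul_pos hTT (hQpos r)))
  have hzero : deriv L 1 = 0 := by
    rw [(hd 1).deriv, xiSum_one hT]
    ring
  have huniq : ∀ r : ℝ, -1 ≤ r → deriv L r = 0 → r = 1 := by
    intro r hr h
    by_contra hr1
    exact (hpos r hr hr1).ne' h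
  have hcont : Continuous L := continuous_iff_continuousAt.mpr fun r => (hd r).continuousAt
  have hmono : StrictMonoOn L (Set.Ici (-1 : ℝ)) := by
    have h1 : StrictMonoOn L (Set.Icc (-1) 1) := by
      refine strictMonoOn_of_deriv_pos (convex_Icc _ _) hcont.continuousOn fun r hr => ?_
      rw [interior_Icc] at hr
      exact hpos r hr.1.le hr.2.ne
    have h2 : StrictMonoOn L (Set.Ici 1) := by
      refine strictMonoOn_of_deriv_pos (convex_Ici _) hcont.continuousOn fun r hr => ?_
      rw [interior_Ici] at hr
      have hr' : (1 : ℝ) < r := hr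
      exact hpos r (by linarith) hr'.ne'
    have h := h1.union h2 (isGreatest_Icc (by norm_num)) isLeast_Ici
    rwa [Set.Icc_union_Ici_eq_Ici (by norm_num)] at h
  have hmax : ¬ IsLocalMax L 1 := by
    intro h
    obtain ⟨ε, hε, hball⟩ := Metric.eventually_nhds_iff.mp h
    have hle := hball (y := 1 + ε / 2) (by
      rw [Real.dist_eq, add_sub_cancel_left, abs_of_pos (by linarith)]
      linarith)
    have hlt := hmono (a := 1) (b := 1 + ε / 2) (by norm_num)
      (Set.mem_Ici.mpr (by linarith)) (by linarith)
    linarith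
  have hmin : ¬ IsLocalMin L 1 := by
    intro h
    obtain ⟨ε, hε, hball⟩ := Metric.eventually_nhds_iff.mp h
    -- the step to the left must also stay inside `[-1, ∞)`
    have hδ : 0 < min (ε / 2) 1 := by positivity
    have hδε := min_le_left (ε / 2) 1
    have hδ1 := min_le_right (ε / 2) 1
    generalize min (ε / 2) 1 = δ at hδ hδε hδ1
    have hle := hball (y := 1 - δ) (by
      rw [Real.dist_eq, sub_sub_cancel_left, abs_neg, abs_of_pos hδ]
      linarith)
    have hlt := hmono (a := 1 - δ) (b := 1) (Set.mem_Ici.mpr (by linarith))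
      (by norm_num) (by linarith)
    linarith
  refine ⟨hpos, hzero, huniq, hmono, fun r hr => ⟨fun h => ?_, fun h => ?_⟩, hzero, hmax, hmin⟩
  · obtain rfl := huniq r hr h.deriv_eq_zero
    exact hmax h
  · obtain rfl := huniq r hr h.deriv_eq_zero
    exact hmin h
end

section
/- Let T ≥ 2 be an integer, set m = (T-2)/(T+1) and c = 3(2T-1)/(T+1)², and define L(r) = (T-1)·ξ(r) - ((T-1)/2)·log(c + (r-m)²) for r ∈ ℝ. Then the fourth derivative of L at 1 equals (T-1)·ξ''''(1) + (1/6)·(T-1)·(T² - 10T + 7) = (T-1)(T+1)(3T² - 20T - 2)/60, and this quantity is nonzero for every integer T ≥ 2. -/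
/-!
Both summands of `L` are differentiated explicitly. With `u = r - m` and `D = c + u²`, the fourth
derivative of `log D` is `-12 (u⁴ - 6 c u² + c²) / D⁴`, the real part of
`2 · d⁴/du⁴ log (u + i √c)` (`iteratedDeriv_four_log`). At `r = 1` one has `u = 3 / (T + 1)` and
`D = 6 / (T + 1)`, so this equals `-(T² - 10 T + 7) / 3`.
The fourth derivative of `ξ` at `1` is
`(1 / (T (T - 1))) ∑ (T - t) (t - 1) (t - 2) (t - 3)`, and the sum telescopes in the basis of
falling factorials (`sum_mul_falling`).
The total is nonzero because `3 T² - 20 T - 2` is negative for `0 ≤ T ≤ 6` and positive for `T ≥ 7`.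
-/

open Finset

theorem iteratedDeriv_four_of_hasDerivAt {f f₁ f₂ f₃ f₄ : ℝ → ℝ}
    (h₁ : ∀ x, HasDerivAt f (f₁ x) x) (h₂ : ∀ x, HasDerivAt f₁ (f₂ x) x)
    (h₃ : ∀ x, HasDerivAt f₂ (f₃ x) x) (h₄ : ∀ x, HasDerivAt f₃ (f₄ x) x) :
    iteratedDeriv 4 f = f₄ := by
  have e₁ : deriv f = f₁ := funext fun x => (h₁ x).deriv
  have e₂ : deriv f₁ = f₂ := funext fun x => (h₂ x).deriv
  have e₃ : deriv f₂ = f₃ := funext fun x => (h₃ x).deriv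
  have e₄ : deriv f₃ = f₄ := funext fun x => (h₄ x).deriv
  simp only [iteratedDeriv_succ', e₁, e₂, e₃, e₄, iteratedDeriv_zero]

theorem iteratedDeriv_four_log {m c : ℝ} (hc : 0 < c) :
    iteratedDeriv 4 (fun r : ℝ => Real.log (c + (r - m) ^ 2)) =
      fun r => -12 * ((r - m) ^ 4 - 6 * c * (r - m) ^ 2 + c ^ 2) / (c + (r - m) ^ 2) ^ 4 := by
  have hD : ∀ x : ℝ, c + (x - m) ^ 2 ≠ 0 := fun x => by positivity
  have hu : ∀ x : ℝ, HasDerivAt (fun r : ℝ => r - m) 1 x := fun x => (hasDerivAt_id x).sub_const m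
  have hd : ∀ x : ℝ, HasDerivAt (fun r : ℝ => c + (r - m) ^ 2) (2 * (x - m)) x := fun x => by
    simpa using ((hu x).fun_pow 2).const_add c
  refine iteratedDeriv_four_of_hasDerivAt
    (f₁ := fun r => 2 * (r - m) / (c + (r - m) ^ 2))
    (f₂ := fun r => 2 * (c - (r - m) ^ 2) / (c + (r - m) ^ 2) ^ 2)
    (f₃ := fun r => 4 * ((r - m) ^ 3 - 3 * c * (r - m)) / (c + (r - m) ^ 2) ^ 3)
    (fun x => (hd x).log (hD x)) (fun x => ?_) (fun x => ?_) (fun x => ?_)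
  · refine (((hu x).const_mul 2).fun_div (hd x) (hD x)).congr_deriv ?_
    have := hD x
    field_simp
    ring
  · refine (((((hu x).fun_pow 2).const_sub c).const_mul 2).fun_div ((hd x).fun_pow 2)
      (pow_ne_zero 2 (hD x))).congr_deriv ?_
    have := hD x
    field_simp
    push_cast
    ring
  · refine (((((hu x).fun_pow 3).fun_sub ((hu x).const_mul (3 * c))).const_mul 4).fun_div
      ((hd x).fun_pow 3) (pow_ne_zero 3 (hD x))).congr_deriv ?_
    have := hD x
    field_simp
    push_cast
    ring

/-- Expanding `N - t` leaves the falling factorials `(t - 1) (t - 2) (t - 3)` and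
`t (t - 1) (t - 2) (t - 3)`, whose sums are falling factorials of one degree more. -/
theorem sum_mul_falling (N : ℝ) (n : ℕ) :
    ∑ t ∈ Finset.Icc 1 n, (N - t) * (((t : ℝ) - 1) * (t - 2) * (t - 3)) =
      N * (n * (n - 1) * (n - 2) * (n - 3)) / 4 -
        ((n : ℝ) + 1) * n * (n - 1) * (n - 2) * (n - 3) / 5 := by
  induction n with
  | zero => simp
  | succ k ih =>
    rw [Finset.sum_Icc_succ_top (by omega), ih]
    push_cast
    ring

theorem cast_descFactorial_four (t : ℕ) :
    (t.descFactorial 4 : ℝ) = t * (t - 1) * (t - 2) * (t - 3) := by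
  rw [← descPochhammer_eval_eq_descFactorial]
  simp [descPochhammer_succ_right]

theorem contDiff_xi (T : ℕ) : ContDiff ℝ 4 (xi T) := by
  unfold xi
  fun_prop

theorem iteratedDeriv_four_xi (T : ℕ) (hT : 2 ≤ T) :
    iteratedDeriv 4 (xi T) 1 = ((T : ℝ) - 2) * ((T : ℝ) - 3) * ((T : ℝ) - 4) / 20 := by
  obtain ⟨n, rfl⟩ : ∃ n, T = n + 1 := ⟨T - 1, by omega⟩
  have hn : (n : ℝ) ≠ 0 := by
    have : n ≠ 0 := by omega
    exact_mod_cast this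
  have hn1 : (n : ℝ) + 1 ≠ 0 := by positivity
  have hterm : ∀ t ∈ Finset.Icc 1 n,
      iteratedDeriv 4 (fun r : ℝ => (((n + 1 : ℕ) : ℝ) - t) / t * r ^ t) 1 =
        (((n + 1 : ℕ) : ℝ) - t) * (((t : ℝ) - 1) * (t - 2) * (t - 3)) := by
    intro t ht
    have ht0 : (t : ℝ) ≠ 0 := by
      have := (Finset.mem_Icc.mp ht).1
      have : t ≠ 0 := by omega
      exact_mod_cast this
    rw [iteratedDeriv_const_mul_field, iteratedDeriv_pow, cast_descFactorial_four, one_pow]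
    field_simp
  unfold xi
  rw [iteratedDeriv_const_mul_field, iteratedDeriv_fun_sum (fun t _ => by fun_prop),
    Nat.add_sub_cancel, Finset.sum_congr rfl hterm, sum_mul_falling]
  push_cast
  rw [add_sub_cancel_right]
  field_simp
  ring

/-- Let `T ≥ 2` be an integer, set `m = (T-2)/(T+1)` and `c = 3(2T-1)/(T+1)²`,
and define `L(r) = (T-1)·ξ(r) - ((T-1)/2)·log(c + (r-m)²)`.  Then the fourth
derivative of `L` at `1` equals
`(T-1)·ξ''''(1) + (1/6)·(T-1)·(T² - 10T + 7) = (T-1)(T+1)(3T² - 20T - 2)/60`,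
and this quantity is nonzero for every integer `T ≥ 2`
(here `ξ''''(1) = (T-2)(T-3)(T-4)/20`). -/
theorem stmt_18 (T : ℕ) (hT : 2 ≤ T) (m c : ℝ)
    (hm : m = ((T : ℝ) - 2) / ((T : ℝ) + 1))
    (hc : c = 3 * (2 * (T : ℝ) - 1) / ((T : ℝ) + 1) ^ 2)
    (L : ℝ → ℝ)
    (hL : L = fun r : ℝ =>
      ((T : ℝ) - 1) * xi T r - (((T : ℝ) - 1) / 2) * Real.log (c + (r - m) ^ 2)) :
    iteratedDeriv 4 L 1
        = ((T : ℝ) - 1) * iteratedDeriv 4 (xi T) 1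
            + (1 / 6) * ((T : ℝ) - 1) * ((T : ℝ) ^ 2 - 10 * (T : ℝ) + 7)
    ∧ iteratedDeriv 4 (xi T) 1 = ((T : ℝ) - 2) * ((T : ℝ) - 3) * ((T : ℝ) - 4) / 20
    ∧ iteratedDeriv 4 L 1
        = ((T : ℝ) - 1) * ((T : ℝ) + 1) * (3 * (T : ℝ) ^ 2 - 20 * (T : ℝ) - 2) / 60
    ∧ iteratedDeriv 4 L 1 ≠ 0 := by
  have hT' : (2 : ℝ) ≤ T := by exact_mod_cast hT
  have hT1 : (T : ℝ) + 1 ≠ 0 := by positivity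
  have hcpos : 0 < c := by
    rw [hc]
    exact div_pos (by linarith) (by positivity)
  have hxi := iteratedDeriv_four_xi T hT
  have hlogC : ContDiff ℝ 4 (fun r : ℝ => Real.log (c + (r - m) ^ 2)) :=
    ContDiff.log (by fun_prop) fun x => by positivity
  have hD : c + (1 - m) ^ 2 = 6 / ((T : ℝ) + 1) := by
    rw [hc, hm]
    field_simp
    ring
  have hlog : iteratedDeriv 4 (fun r : ℝ => Real.log (c + (r - m) ^ 2)) 1 =
      -((T : ℝ) ^ 2 - 10 * T + 7) / 3 := by
    have hu : 1 - m = 3 / ((T : ℝ) + 1) := by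
      rw [hm]
      field_simp
      ring
    simp only [iteratedDeriv_four_log hcpos]
    rw [hD, hu, hc]
    field_simp
    ring
  have hL4 : iteratedDeriv 4 L 1 = ((T : ℝ) - 1) * iteratedDeriv 4 (xi T) 1
      + (1 / 6) * ((T : ℝ) - 1) * ((T : ℝ) ^ 2 - 10 * (T : ℝ) + 7) := by
    rw [hL, iteratedDeriv_fun_sub (contDiff_const.mul (contDiff_xi T)).contDiffAt
      (contDiff_const.mul hlogC).contDiffAt, iteratedDeriv_const_mul_field,
      iteratedDeriv_const_mul_field, hlog]
    ring
  have hval : iteratedDeriv 4 L 1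
      = ((T : ℝ) - 1) * ((T : ℝ) + 1) * (3 * (T : ℝ) ^ 2 - 20 * (T : ℝ) - 2) / 60 := by
    rw [hL4, hxi]
    ring
  refine ⟨hL4, hxi, hval, ?_⟩
  have hq : 3 * (T : ℝ) ^ 2 - 20 * (T : ℝ) - 2 ≠ 0 := by
    rcases Nat.lt_or_ge T 7 with h | h
    · have : (T : ℝ) ≤ 6 := by exact_mod_cast Nat.le_of_lt_succ h
      nlinarith
    · have : (7 : ℝ) ≤ T := by exact_mod_cast h
      nlinarith
  rw [hval]
  have hT2 : (T : ℝ) - 1 ≠ 0 := by linarith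
  positivity
end
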